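/- arXiv:2012.14861 — 9 statements merged into one kernel-verified Lean document; each statement's English description precedes it below -/
import Mathlib

section
/- Let d, n, s be positive integers with gcd(s,n)=1 and d ≥ 3, and suppose n ≤ d(d−1) and d does not divide n. Then for all a, b ∈ F_{q^n}, the F_q-dimension of the kernel of the σ-linearized polynomial a·x + b·x^σ − x^{σ^d} (viewed as an F_q-linear endomorphism of F_{q^n}) is strictly less than d. -/
theorem aux_abel {L : Type*} [CommRing L] (c g : ℕ → L) (e : ℕ) :
    ∑ j ∈ Finset.range e, (∑ i ∈ Finset.range (j+1), c i) * (g (j+1) - g j)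
      = (∑ i ∈ Finset.range (e+1), c i) * g e - ∑ j ∈ Finset.range (e+1), c j * g j := by
  induction e with
  | zero => simp
  | succ e ih =>
    rw [Finset.sum_range_succ, ih, Finset.sum_range_succ _ (e+1), Finset.sum_range_succ _ (e+1)]
    ring

theorem aux_indep {K L : Type*} [Field K] [Field L] [Algebra K L] [FiniteDimensional K L]
    (σ : L ≃ₐ[K] L) (hfix : ∀ x : L, σ x = x → ∃ k : K, algebraMap K L k = x) (e : ℕ) :
    ∀ (W : Submodule K L) (c : ℕ → L), e ≤ Module.finrank K W →
      (∀ x ∈ W, ∑ j ∈ Finset.range e, c j * (σ ^ j) x = 0) → ∀ j < e, c j = 0 := by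
  induction e with
  | zero => intro W c _ _ j hj; omega
  | succ e ih =>
    intro W c hW hc
    have hWne : W ≠ ⊥ := by
      rintro rfl
      simp at hW
    obtain ⟨w, hwW, hw⟩ := W.exists_mem_ne_zero_of_ne_bot hWne
    let T : L →ₗ[K] L := (σ.toLinearMap - LinearMap.id) ∘ₗ LinearMap.mulLeft K w⁻¹
    have hT : ∀ x, T x = σ (w⁻¹ * x) - w⁻¹ * x := fun x => by simp [T]
    have hker : LinearMap.ker (T.domRestrict W) ≤ Submodule.span K {(⟨w, hwW⟩ : W)} := by
      intro x hx
      rw [LinearMap.mem_ker, LinearMap.domRestrict_apply, hT, sub_eq_zero] at hx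
      obtain ⟨k, hk⟩ := hfix _ hx
      rw [Submodule.mem_span_singleton]
      refine ⟨k, Subtype.ext ?_⟩
      simp only [Submodule.coe_smul, Algebra.smul_def, hk]
      field_simp
    have h1 : Module.finrank K (LinearMap.ker (T.domRestrict W)) ≤ 1 :=
      (Submodule.finrank_mono hker).trans ((finrank_span_le_card _).trans (by simp))
    have h2 := LinearMap.finrank_range_add_finrank_ker (T.domRestrict W)
    have hsum : ∀ x ∈ W, ∑ j ∈ Finset.range (e+1), (c j * (σ ^ j) w) * (σ ^ j) (w⁻¹ * x) = 0 := by
      intro x hx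
      rw [← hc x hx]
      refine Finset.sum_congr rfl fun j _ => ?_
      rw [mul_assoc, ← map_mul]
      congr 2
      field_simp
    have htot : ∑ j ∈ Finset.range (e+1), (c j * (σ ^ j) w) = 0 := by
      have := hsum w hwW
      simpa [hw] using this
    have key := ih (LinearMap.range (T.domRestrict W))
      (fun j => ∑ i ∈ Finset.range (j+1), c i * (σ ^ i) w) (by omega) (by
        rintro _ ⟨x, rfl⟩
        have := aux_abel (fun j => c j * (σ ^ j) w) (fun j => (σ ^ j) (w⁻¹ * (x : L))) e
        rw [htot, hsum x x.2] at this
        rw [LinearMap.domRestrict_apply, hT]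
        simp only [map_sub]
        simpa [pow_succ] using this)
    have key2 : ∀ j ≤ e + 1, ∑ i ∈ Finset.range j, c i * (σ ^ i) w = 0 := by
      intro j hj
      rcases j with _ | j
      · simp
      · rcases Nat.lt_or_ge j e with h | h
        · exact key j h
        · have : j = e := by omega
          rw [this]; exact htot
    intro j hj
    have h3 := key2 (j+1) (by omega)
    rw [Finset.sum_range_succ, key2 j (by omega), zero_add] at h3
    rcases mul_eq_zero.1 h3 with h | h
    · exact h
    · exact absurd h ((map_ne_zero_iff _ (σ ^ j).injective).2 hw)

theorem aux_red {L M : Type*} [Field L] [AddCommGroup M] [Module L M] (u : ℕ → M) (d : ℕ)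
    (α β : ℕ → L) (hα : ∀ i, α i ≠ 0) (hu : ∀ i, u (i + d) = α i • u i + β i • u (i+1)) (t : ℕ) :
    ∀ m, ∃ e : L, e ≠ 0 ∧
      u (t * d + m) - e • u m ∈ Submodule.span L (u '' Set.Ioc m (m + t)) := by
  induction t with
  | zero => intro m; exact ⟨1, one_ne_zero, by simp⟩
  | succ t ih =>
    intro m
    obtain ⟨e, he, h⟩ := ih (m + d)
    refine ⟨e * α m, mul_ne_zero he (hα m), ?_⟩
    have hle : Submodule.span L (u '' Set.Ioc (m + d) (m + d + t)) ≤
        Submodule.span L (u '' Set.Ioc m (m + (t + 1))) := by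
      rw [Submodule.span_le]
      rintro _ ⟨i, ⟨h1, h2⟩, rfl⟩
      obtain ⟨i, rfl⟩ : ∃ j, i = j + d := ⟨i - d, by omega⟩
      rw [hu]
      exact Submodule.add_mem _
        (Submodule.smul_mem _ _ (Submodule.subset_span ⟨i, ⟨by omega, by omega⟩, rfl⟩))
        (Submodule.smul_mem _ _ (Submodule.subset_span ⟨i+1, ⟨by omega, by omega⟩, rfl⟩))
    have h' := hle h
    have h3 : (e * β m) • u (m+1) ∈ Submodule.span L (u '' Set.Ioc m (m + (t + 1))) :=
      Submodule.smul_mem _ _ (Submodule.subset_span ⟨m+1, ⟨by omega, by omega⟩, rfl⟩)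
    convert Submodule.add_mem _ h' h3 using 1
    rw [hu m, show (t+1)*d + m = t*d + (m+d) by ring]
    module

theorem aux_main {L M : Type*} [Field L] [AddCommGroup M] [Module L M] (u : ℕ → M) (d n : ℕ)
    (α β : ℕ → L) (hα : ∀ i, α i ≠ 0) (hu : ∀ i, u (i + d) = α i • u i + β i • u (i+1))
    (hd : 3 ≤ d) (hnd : n ≤ d * (d - 1)) (hdvd : ¬ d ∣ n)
    (hli : LinearIndependent L (fun i : Fin d => u i)) (h0 : u n = u 0) : False := by
  have hr0 : n % d ≠ 0 := fun h => hdvd (Nat.dvd_of_mod_eq_zero h)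
  have hrd : n % d < d := Nat.mod_lt _ (by omega)
  have hnk : n / d * d + n % d = n := Nat.div_add_mod' n d
  have hk : n / d < d - 1 := by
    by_contra hk
    have := Nat.mul_le_mul_right d (not_lt.1 hk)
    rw [mul_comm (d-1)] at this
    omega
  obtain ⟨e, he, h⟩ := aux_red u d α β hα hu (n / d) (n % d)
  rw [hnk, h0] at h
  generalize n % d = r at *
  generalize n / d = k at *
  have hS : ∀ i, i < d → i ≠ r → u i ∈ Submodule.span L
      ((fun i : Fin d => u i) '' (Set.univ \ {⟨r, hrd⟩})) := fun i hi hir =>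
    Submodule.subset_span ⟨⟨i, hi⟩, by simpa using hir, rfl⟩
  have hle : Submodule.span L (u '' Set.Ioc r (r + k)) ≤ Submodule.span L
      ((fun i : Fin d => u i) '' (Set.univ \ {⟨r, hrd⟩})) := by
    rw [Submodule.span_le]
    rintro _ ⟨i, ⟨h1, h2⟩, rfl⟩
    rcases Nat.lt_or_ge i d with hi | hi
    · exact hS i hi (by omega)
    · obtain ⟨i, rfl⟩ : ∃ j, i = j + d := ⟨i - d, by omega⟩
      rw [hu]
      exact Submodule.add_mem _
        (Submodule.smul_mem _ _ (hS i (by omega) (by omega)))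
        (Submodule.smul_mem _ _ (hS (i+1) (by omega) (by omega)))
  have h4 := Submodule.sub_mem _ (hS 0 (by omega) (by omega)) (hle h)
  rw [sub_sub_cancel] at h4
  rw [Submodule.smul_mem_iff _ he] at h4
  rw [linearIndependent_iff_notMem_span] at hli
  exact hli ⟨r, hrd⟩ h4

theorem aux_fix (q : ℕ) (K L : Type*) [Field K] [Field L] [Fintype K] [Fintype L] [Algebra K L]
    (hcardK : Fintype.card K = q)
    (n : ℕ) (hcardL : Fintype.card L = q ^ n)
    (s : ℕ) (hsn : Nat.gcd s n = 1) (x : L) (hx : x ^ q ^ s = x) :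
    ∃ k : K, algebraMap K L k = x := by
  have hit : ∀ m, (fun y : L => y ^ q)^[m] x = x ^ q ^ m := fun m => by
    induction m with
    | zero => simp
    | succ m ih => rw [Function.iterate_succ_apply', ih, pow_succ, pow_mul]
  have h1 : Function.IsPeriodicPt (fun y : L => y ^ q) s x := by
    rw [Function.IsPeriodicPt, Function.IsFixedPt, hit, hx]
  have h2 : Function.IsPeriodicPt (fun y : L => y ^ q) n x := by
    rw [Function.IsPeriodicPt, Function.IsFixedPt, hit, ← hcardL, FiniteField.pow_card]
  have h3 := h1.gcd h2
  rw [hsn, Function.IsPeriodicPt, Function.IsFixedPt, hit, pow_one, ← hcardK] at h3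
  have := IsGalois.mem_range_algebraMap_iff_fixed (F := K) x
  refine this.2 fun f => ?_
  obtain ⟨i, rfl⟩ := (FiniteField.bijective_frobeniusAlgEquivOfAlgebraic_pow K L).2 f
  have hF : FiniteField.frobeniusAlgEquivOfAlgebraic K L x = x := by
    simpa using h3
  show (FiniteField.frobeniusAlgEquivOfAlgebraic K L ^ (i : ℕ)) x = x
  generalize (i : ℕ) = m
  induction m with
  | zero => simp
  | succ m ih => rw [pow_succ, AlgEquiv.mul_apply, hF, ih]


/-- Let `q` be a prime power, `F_{q^n}` the field with `q^n` elements,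
`σ : x ↦ x^{q^s}` with `gcd(s,n) = 1` a generator of `Gal(F_{q^n}/F_q)`.
If `d ≥ 3`, `n ≤ d(d-1)` and `d ∤ n`, then for all `a b ∈ F_{q^n}` the `F_q`-dimension of
the kernel of `x ↦ a·x + b·σ(x) − σ^d(x)` is strictly less than `d`. -/
theorem stmt_0 (p q : ℕ) (hp : p.Prime) (hq : ∃ m : ℕ, 0 < m ∧ q = p ^ m)
    (K L : Type*) [Field K] [Field L] [Fintype K] [Fintype L] [Algebra K L]
    (hcardK : Fintype.card K = q)
    (n : ℕ) (hn : 0 < n) (hcardL : Fintype.card L = q ^ n)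
    (s : ℕ) (hs : 0 < s) (hsn : Nat.gcd s n = 1)
    (σ : L ≃ₐ[K] L) (hσ : ∀ x : L, σ x = x ^ q ^ s)
    (d : ℕ) (hd : 3 ≤ d) (hnd : n ≤ d * (d - 1)) (hdvd : ¬ d ∣ n)
    (a b : L) :
    Module.finrank K
      (LinearMap.ker
        (LinearMap.mulLeft K a + LinearMap.mulLeft K b ∘ₗ σ.toLinearMap
          - (σ ^ d : L ≃ₐ[K] L).toLinearMap)) < d := by
  have hfix : ∀ x : L, σ x = x → ∃ k : K, algebraMap K L k = x := fun x hx =>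
    aux_fix q K L hcardK n hcardL s hsn x (by rw [← hσ, hx])
  by_contra hcon
  rw [not_lt] at hcon
  generalize hV : (LinearMap.ker
        (LinearMap.mulLeft K a + LinearMap.mulLeft K b ∘ₗ σ.toLinearMap
          - (σ ^ d : L ≃ₐ[K] L).toLinearMap)) = V at hcon
  have hmem : ∀ x ∈ V, (σ ^ d) x = a * x + b * σ x := by
    intro x hx
    rw [← hV, LinearMap.mem_ker] at hx
    simpa using (sub_eq_zero.1 hx).symm
  have hind := aux_indep σ hfix d V
  have hr : ∀ (i : ℕ), ∀ x ∈ V, (σ ^ (i + d)) x = (σ ^ i) a * (σ ^ i) x + (σ ^ i) b * (σ ^ (i + 1)) x := by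
    intro i x hx
    rw [pow_add, AlgEquiv.mul_apply, hmem x hx, map_add, map_mul, map_mul, pow_succ,
      AlgEquiv.mul_apply]
  have ha : a ≠ 0 := by
    rintro rfl
    obtain ⟨b', rfl⟩ := σ.surjective b
    have := hind (fun j => if j = 0 then b' else if j = d - 1 then -1 else 0) hcon (by
      intro x hx
      have h := hmem x hx
      obtain ⟨e, rfl⟩ : ∃ e, d = e + 2 := ⟨d - 2, by omega⟩
      rw [zero_mul, zero_add, pow_succ', AlgEquiv.mul_apply, ← map_mul] at h
      have h := σ.injective h
      rw [Finset.sum_range_succ, Finset.sum_range_succ']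
      rw [Finset.sum_eq_zero]
      · simp [h]
      · intro i hi
        have := Finset.mem_range.1 hi
        simp; intro h; omega) (d - 1) (by omega)
    rw [if_neg (by omega), if_pos rfl] at this
    exact neg_ne_zero.2 one_ne_zero this
  have hσn : ∀ x : L, (σ ^ n) x = x := by
    intro x
    have hit : ∀ m, (σ ^ m) x = x ^ (q ^ s) ^ m := fun m => by
      induction m with
      | zero => simp
      | succ m ih => rw [pow_succ', AlgEquiv.mul_apply, ih, hσ, ← pow_mul, ← pow_succ]
    rw [hit, ← pow_mul, mul_comm, pow_mul, ← hcardL, FiniteField.pow_card_pow]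
  refine aux_main (fun i : ℕ => (fun x : V => (σ ^ i) (x : L))) d n (fun i => (σ ^ i) a)
    (fun i => (σ ^ i) b) (fun i => (map_ne_zero_iff _ (σ ^ i).injective).2 ha) ?_ hd hnd hdvd ?_ ?_
  · intro i
    funext x
    exact hr i x x.2
  · rw [Fintype.linearIndependent_iff]
    intro g hg i
    have := hind (fun j => if h : j < d then g ⟨j, h⟩ else 0) hcon (by
      intro x hx
      have := congrFun hg ⟨x, hx⟩
      rw [← Fin.sum_univ_eq_sum_range (fun j => (if h : j < d then g ⟨j, h⟩ else 0) * (σ ^ j) x)]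
      simpa using this) i i.2
    simpa using this
  · funext x
    simp [hσn]
end

section
/- Let d, n, s be positive integers with gcd(s,n)=1, d ≥ 3 and n = d(d−1)+1. Then for a, b ∈ F_{q^n}, the F_q-dimension of the kernel of a·x + b·x^σ − x^{σ^d} equals d if and only if the following three conditions hold: N_{q^n/q}(a) = (−1)^{d−1}; b = −∏_{i=0}^{d−1} σ^{id+1}(a); and d−1 is a power of the characteristic p of F_q. -/
namespace Aux
open Finset

theorem aux_parts {L : Type*} [CommRing L] (c : ℕ → L) (y : ℕ → L) (m : ℕ) :
    ∑ i ∈ range m, (∑ j ∈ range (i+1), c j) * (y (i+1) - y i) + ∑ i ∈ range (m+1), c i * y i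
      = (∑ j ∈ range (m+1), c j) * y m := by
  induction m with
  | zero => simp
  | succ m ih =>
    rw [sum_range_succ, sum_range_succ (fun i => c i * y i), sum_range_succ c (m+1)]
    linear_combination ih

theorem deg_bound {K L : Type*} [Field K] [Field L] [Algebra K L] [FiniteDimensional K L]
    (σ : L ≃ₐ[K] L) (hfix : ∀ x, σ x = x → ∃ k, algebraMap K L k = x) :
    ∀ (m : ℕ) (c : ℕ → L) (V : Submodule K L), m ≤ Module.finrank K V →
      (∀ x ∈ V, ∑ i ∈ range m, c i * (σ ^ i) x = 0) → ∀ i < m, c i = 0 := by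
  intro m
  induction m with
  | zero => intro c V _ _ i hi; omega
  | succ m ih =>
    intro c V hV hc
    have hpos : 0 < Module.finrank K V := by omega
    have : Nontrivial V := Module.finrank_pos_iff.mp hpos
    obtain ⟨⟨g, hgV⟩, hg⟩ := exists_ne (0 : V)
    have hg0 : g ≠ 0 := by
      rintro rfl; exact hg rfl
    let φ : L →ₗ[K] L := (σ.toLinearMap - LinearMap.id) ∘ₗ LinearMap.mulLeft K g⁻¹
    have hφ : ∀ x, φ x = σ (g⁻¹ * x) - g⁻¹ * x := fun x => by simp [φ]
    have hW : m ≤ Module.finrank K (V.map φ) := by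
      have h1 := LinearMap.finrank_range_add_finrank_ker (φ.domRestrict V)
      rw [LinearMap.range_domRestrict] at h1
      have h2 : Module.finrank K (LinearMap.ker (φ.domRestrict V)) ≤ 1 := by
        refine finrank_le_one (⟨⟨g, hgV⟩, ?_⟩) ?_
        · simp [LinearMap.domRestrict_apply, hφ, hg0]
        · rintro ⟨⟨x, hx⟩, hx'⟩
          simp only [LinearMap.mem_ker, LinearMap.domRestrict_apply, hφ] at hx'
          obtain ⟨k, hk⟩ := hfix _ (sub_eq_zero.mp hx')
          refine ⟨k, ?_⟩
          ext
          simp only [Submodule.coe_smul, Algebra.smul_def, hk]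
          field_simp
      omega
    set c' : ℕ → L := fun i => c i * (σ ^ i) g with hc'
    have hsum : ∑ j ∈ range (m+1), c' j = 0 := hc g hgV
    have key := ih (fun i => ∑ j ∈ range (i+1), c' j) (V.map φ) hW (by
      rintro _ ⟨x, hx, rfl⟩
      have h1 := aux_parts c' (fun i => (σ ^ i) (g⁻¹ * x)) m
      have h2 : ∑ i ∈ range (m+1), c' i * (σ ^ i) (g⁻¹ * x) = 0 := by
        rw [← hc x hx]
        refine sum_congr rfl fun i _ => ?_
        rw [hc']
        simp only
        rw [mul_assoc, ← map_mul, mul_inv_cancel_left₀ hg0]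
      rw [h2, hsum, zero_mul, add_zero] at h1
      rw [← h1]
      refine sum_congr rfl fun i _ => ?_
      simp only [hφ, map_sub, pow_succ, AlgEquiv.mul_apply])
    have key' : ∀ i < m + 1, ∑ j ∈ range (i+1), c' j = 0 := by
      intro i hi
      rcases Nat.lt_succ_iff_lt_or_eq.mp hi with h | rfl
      · exact key i h
      · exact hsum
    intro i hi
    have h3 : c' i = 0 := by
      rcases i with _ | i
      · simpa using key' 0 hi
      · have := key' (i+1) hi
        rw [sum_range_succ, key' i (by omega), zero_add] at this
        exact this
    rcases mul_eq_zero.mp h3 with h | h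
    · exact h
    · exact absurd ((map_eq_zero_iff _ (σ ^ i).injective).mp h) hg0

theorem fix_of_pow {K L : Type*} [Field K] [Field L] [Fintype K] [Algebra K L] (x : L)
    (h : x ^ Fintype.card K = x) : ∃ k, algebraMap K L k = x := by
  have h1 := FiniteField.roots_X_pow_card_sub_X K
  have h2 : (Polynomial.X ^ Fintype.card K - Polynomial.X : Polynomial K)
      = ∏ k : K, (Polynomial.X - Polynomial.C k) := by
    have hq := Fintype.one_lt_card (α := K)
    have hd := FiniteField.X_pow_card_sub_X_natDegree_eq K hq
    have hm : (Polynomial.X ^ Fintype.card K - Polynomial.X : Polynomial K).Monic := by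
      refine (Polynomial.monic_X_pow _).sub_of_left ?_
      rw [Polynomial.degree_X, Polynomial.degree_X_pow]
      exact_mod_cast hq
    have h4 := Polynomial.prod_multiset_X_sub_C_of_monic_of_roots_card_eq hm
      (by rw [h1, hd]; rfl)
    rw [h1] at h4
    exact h4.symm
  have h3 := congrArg (Polynomial.aeval x) h2
  simp [map_prod, h, sub_self] at h3
  obtain ⟨k, hk⟩ := prod_eq_zero_iff.mp h3.symm
  exact ⟨k, (sub_eq_zero.mp hk.2).symm⟩

theorem fix_gen {K L : Type*} [Field K] [Field L] [Fintype K] [Algebra K L] (q n t : ℕ)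
    (hq : Fintype.card K = q) (hL : ∀ x : L, x ^ q ^ n = x) (hc : Nat.gcd t n = 1) (x : L)
    (h : x ^ q ^ t = x) : ∃ k, algebraMap K L k = x := by
  have hit : ∀ j, (fun y : L => y ^ q)^[j] x = x ^ q ^ j := by
    intro j
    induction j with
    | zero => simp
    | succ j ih => rw [Function.iterate_succ_apply', ih, pow_succ, pow_mul]
  have h1 : Function.IsPeriodicPt (fun y : L => y ^ q) t x := by
    rw [Function.IsPeriodicPt, Function.IsFixedPt, hit, h]
  have h2 : Function.IsPeriodicPt (fun y : L => y ^ q) n x := by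
    rw [Function.IsPeriodicPt, Function.IsFixedPt, hit, hL]
  have h3 := h1.gcd h2
  rw [hc, Function.IsPeriodicPt, Function.IsFixedPt, hit, pow_one] at h3
  exact fix_of_pow x (by rw [hq]; exact h3)

/-- reindexing a product of a periodic function -/
theorem prod_coprime {M : Type*} [CommMonoid M] (n t : ℕ) (hn : 0 < n) (F : ℕ → M)
    (hF : ∀ i, F (i + n) = F i) (h : Nat.gcd t n = 1) :
    ∏ i ∈ range n, F (t * i) = ∏ i ∈ range n, F i := by
  have hmod : ∀ i, F i = F (i % n) := by
    intro i
    exact (Function.Periodic.map_mod_nat hF i).symm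
  refine prod_bij (fun i _ => (t * i) % n) ?_ ?_ ?_ ?_
  · intro i _; exact mem_range.mpr (Nat.mod_lt _ hn)
  · intro i hi j hj hij
    have h1 : t * i ≡ t * j [MOD n] := hij
    have h2 : i ≡ j [MOD n] := Nat.ModEq.cancel_left_of_coprime (by rw [Nat.gcd_comm]; exact h) h1
    exact Nat.ModEq.eq_of_lt_of_lt h2 (mem_range.mp hi) (mem_range.mp hj)
  · intro j hj
    obtain ⟨u, hu, hu2⟩ := Nat.exists_mul_mod_eq_of_coprime j h hn.ne'
    exact ⟨u, mem_range.mpr hu, by rw [hu2, Nat.mod_eq_of_lt (mem_range.mp hj)]⟩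
  · intro i _; exact hmod _

theorem prod_mul_range {M : Type*} [CommMonoid M] (m d : ℕ) (F : ℕ → M) :
    ∏ i ∈ range m, ∏ j ∈ range d, F (d * i + j) = ∏ i ∈ range (d * m), F i := by
  induction m with
  | zero => simp
  | succ m ih => rw [prod_range_succ, ih, Nat.mul_succ, prod_range_add]

/-- Hilbert 90 -/
theorem hilb {K L : Type*} [Field K] [Field L] [Algebra K L] [FiniteDimensional K L]
    (ρ : L ≃ₐ[K] L) (hfix : ∀ x, ρ x = x → ∃ k, algebraMap K L k = x)
    (n : ℕ) (hn : 0 < n) (hr : Module.finrank K L = n) (hρ : ∀ x, (ρ ^ n) x = x) (c : L)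
    (hc : ∏ i ∈ range n, (ρ ^ i) c = 1) : ∃ g ≠ 0, c * ρ g = g := by
  by_contra! hcon
  let P : ℕ → L := fun i => ∏ j ∈ range i, (ρ ^ j) c
  have hz : ∀ θ, ∑ i ∈ range n, P i * (ρ ^ i) θ = 0 := by
    intro θ
    by_contra h
    refine hcon _ h ?_
    have h1 : ∀ i, c * ρ (P i * (ρ ^ i) θ) = P (i+1) * (ρ ^ (i+1)) θ := by
      intro i
      simp only [P]
      rw [prod_range_succ', map_mul, map_prod]
      simp only [pow_succ', AlgEquiv.mul_apply, pow_zero, AlgEquiv.one_apply]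
      ring
    rw [map_sum, mul_sum, sum_congr rfl (fun i _ => h1 i)]
    have h2 := sum_range_succ (fun i => P i * (ρ ^ i) θ) n
    rw [sum_range_succ'] at h2
    have h3 : P n = 1 := hc
    have h4 : P 0 = 1 := by simp [P]
    simp only [h3, h4, hρ, pow_zero, AlgEquiv.one_apply] at h2
    exact add_right_cancel h2
  have := deg_bound ρ hfix n P ⊤ (by rw [finrank_top, hr]) (fun x _ => hz x) 0 hn
  simp [P] at this

/-- coefficients of `σ^{dk}` on the kernel -/
def Hc {K L : Type*} [Field K] [Field L] [Algebra K L] (σ : L ≃ₐ[K] L) (d : ℕ) (a b : L) :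
    ℕ → ℕ → L
  | 0, 0 => 1
  | 0, _ + 1 => 0
  | k + 1, 0 => (σ ^ d) (Hc σ d a b k 0) * a
  | k + 1, j + 1 => (σ ^ d) (Hc σ d a b k (j + 1)) * (σ ^ (j + 1)) a
      + (σ ^ d) (Hc σ d a b k j) * (σ ^ j) b

section
variable {K L : Type*} [Field K] [Field L] [Algebra K L] (σ : L ≃ₐ[K] L) (d : ℕ) (a b : L)

theorem Hc_gt : ∀ k j, k < j → Hc σ d a b k j = 0 := by
  intro k
  induction k with
  | zero => intro j hj; obtain ⟨j, rfl⟩ := Nat.exists_eq_succ_of_ne_zero hj.ne'; rfl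
  | succ k ih =>
    intro j hj
    obtain ⟨j, rfl⟩ := Nat.exists_eq_succ_of_ne_zero (by omega : j ≠ 0)
    simp only [Hc]
    rw [ih j (by omega), ih (j+1) (by omega)]
    simp

theorem Hc_left (k : ℕ) : Hc σ d a b k 0 = ∏ i ∈ range k, (σ ^ (d * i)) a := by
  induction k with
  | zero => rfl
  | succ k ih =>
    rw [prod_range_succ', Hc, ih, map_prod]
    simp only [← AlgEquiv.mul_apply, ← pow_add]
    congr 1
    refine prod_congr rfl fun i _ => ?_
    congr 2; ring

theorem Hc_diag (e k : ℕ) :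
    Hc σ (e + 1) a b k k = ∏ i ∈ range k, (σ ^ (e * i + (k - 1))) b := by
  induction k with
  | zero => rfl
  | succ k ih =>
    rw [prod_range_succ', Hc, ih, Hc_gt _ _ _ _ _ _ (Nat.lt_succ_self k), map_prod]
    simp only [← AlgEquiv.mul_apply, ← pow_add, map_zero, zero_mul, zero_add]
    congr 1
    · refine prod_congr rfl fun i hi => ?_
      have := mem_range.mp hi
      congr 2
      have : k + 1 - 1 = (k - 1) + 1 := by omega
      rw [this]; ring
    · simp

theorem Hc_expand (x : L) (hx : (σ ^ d) x = a * x + b * σ x) (k : ℕ) :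
    (σ ^ (d * k)) x = ∑ j ∈ range (k + 1), Hc σ d a b k j * (σ ^ j) x := by
  induction k with
  | zero => simp [Hc]
  | succ k ih =>
    have h1 : (σ ^ (d * (k + 1))) x = (σ ^ d) ((σ ^ (d * k)) x) := by
      rw [← AlgEquiv.mul_apply, ← pow_add]; congr 2; ring
    have h2 : ∀ j, (σ ^ d) ((σ ^ j) x) = (σ ^ j) a * (σ ^ j) x + (σ ^ j) b * (σ ^ (j+1)) x := by
      intro j
      rw [← AlgEquiv.mul_apply, ← pow_add, add_comm, pow_add, AlgEquiv.mul_apply, hx, map_add,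
        map_mul, map_mul, pow_succ, AlgEquiv.mul_apply]
    rw [h1, ih, map_sum]
    simp only [map_mul, h2, mul_add, sum_add_distrib]
    conv_rhs => rw [sum_range_succ']
    simp only [Hc, add_mul, sum_add_distrib]
    rw [sum_range_succ (fun i => (σ ^ d) (Hc σ d a b k (i + 1)) * (σ ^ (i + 1)) a * (σ ^ (i + 1)) x),
      Hc_gt _ _ _ _ _ _ (Nat.lt_succ_self k), sum_range_succ']
    simp only [map_zero, zero_mul, add_zero, pow_zero, AlgEquiv.one_apply, mul_assoc]
    ring

theorem forward [FiniteDimensional K L] (e : ℕ) (he : 2 ≤ e)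
    (hfix : ∀ x, σ x = x → ∃ k, algebraMap K L k = x)
    (hn : ∀ x, (σ ^ ((e + 1) * e + 1)) x = x) (V : Submodule K L)
    (hV : Module.finrank K V = e + 1) (hx : ∀ x ∈ V, (σ ^ (e + 1)) x = a * x + b * σ x) :
    (∀ j, 1 ≤ j → j < e → Hc σ (e + 1) a b e j = 0) ∧ σ (Hc σ (e + 1) a b e e) * a = 1 ∧
      σ (Hc σ (e + 1) a b e 0) + σ (Hc σ (e + 1) a b e e) * b = 0 := by
  set H := Hc σ (e + 1) a b e with hH
  let c : ℕ → L := fun j => if j = 0 then σ (H e) * a - 1 else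
    σ (H (j - 1)) + if j = 1 then σ (H e) * b else 0
  have key := deg_bound σ hfix (e + 1) c V hV.ge (by
    intro x hxV
    have h1 := Hc_expand σ (e + 1) a b x (hx x hxV) e
    have h2 : x = σ ((σ ^ ((e + 1) * e)) x) := by
      conv_lhs => rw [← hn x]
      rw [pow_succ', AlgEquiv.mul_apply]
    rw [h1, map_sum, ← hH, sum_range_succ] at h2
    simp only [map_mul, ← AlgEquiv.mul_apply, ← pow_succ'] at h2
    rw [hx x hxV] at h2
    rw [sum_range_succ']
    have h3 : ∑ k ∈ range e, c (k + 1) * (σ ^ (k + 1)) x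
        = ∑ k ∈ range e, σ (H k) * (σ ^ (k + 1)) x + σ (H e) * b * σ x := by
      obtain ⟨f, rfl⟩ : ∃ f, e = f + 1 := ⟨e - 1, by omega⟩
      rw [sum_range_succ', sum_range_succ' (fun k => σ (H k) * (σ ^ (k + 1)) x)]
      simp [c]
      ring
    rw [h3]
    simp only [c, if_true, pow_zero, AlgEquiv.one_apply]
    linear_combination - h2)
  refine ⟨?_, ?_, ?_⟩
  · intro j hj hje
    have := key (j + 1) (by omega)
    have hj0 : j ≠ 0 := by omega
    simpa [c, hj0] using this
  · have := key 0 (by omega)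
    simpa [c, sub_eq_zero] using this
  · have := key 1 (by omega)
    simpa [c] using this

theorem Hc_const (ε : L) (hε : ε = 1 ∨ ε = -1) (k : ℕ) :
    ∀ j, Hc σ d ε (-1) k j = (k.choose j : L) * ε ^ (k + j) * (-1) ^ j := by
  have h2 : ε * ε = 1 := by rcases hε with rfl | rfl <;> ring
  have h3 : ∀ i, (σ ^ i) ε = ε := by
    intro i; rcases hε with rfl | rfl
    · exact map_one (σ ^ i)
    · rw [map_neg, map_one]
  induction k with
  | zero => intro j; cases j <;> simp [Hc]
  | succ k ih =>
    intro j
    cases j with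
    | zero =>
      rw [Hc, ih]
      simp only [map_mul, map_pow, map_natCast, map_neg, map_one, h3]
      simp [pow_succ]
    | succ j =>
      rw [Hc, ih, ih]
      simp only [map_mul, map_pow, map_natCast, map_neg, map_one, h3, Nat.choose_succ_succ,
        Nat.cast_add, Nat.succ_eq_add_one]
      have : ε ^ (k + 1 + (j + 1)) = ε ^ (k + j) := by
        rw [show k + 1 + (j + 1) = (k + j) + 2 by ring, pow_add, pow_two, h2, mul_one]
      rw [this, show k + (j + 1) = (k + j) + 1 by ring, pow_succ ε, pow_succ (-1 : L)]
      linear_combination (-(k.choose (j+1) : L) * ε ^ (k + j) * (-1) ^ j) * h2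
end

theorem poly_bound {K L : Type*} [Field K] [Field L] [Algebra K L] [FiniteDimensional K L]
    (σ : L ≃ₐ[K] L) (hfix : ∀ x, σ x = x → ∃ k, algebraMap K L k = x) (P : Polynomial K)
    (hP : P ≠ 0) (V : Submodule K L)
    (hV : ∀ x ∈ V, (Polynomial.aeval (σ.toLinearMap : Module.End K L) P) x = 0) :
    Module.finrank K V ≤ P.natDegree := by
  by_contra! h
  have hpow : ∀ i : ℕ, ∀ x : L, ((σ.toLinearMap : Module.End K L) ^ i) x = (σ ^ i) x := by
    intro i
    induction i with
    | zero => intro x; simp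
    | succ i ih => intro x; rw [pow_succ, pow_succ, Module.End.mul_apply, ih]; rfl
  have := deg_bound σ hfix (P.natDegree + 1) (fun i => algebraMap K L (P.coeff i)) V h (by
    intro x hx
    rw [← hV x hx, Polynomial.aeval_eq_sum_range, LinearMap.sum_apply]
    refine sum_congr rfl fun i _ => ?_
    rw [LinearMap.smul_apply, hpow, Algebra.smul_def]) P.natDegree (by omega)
  simp [hP] at this

theorem backward0 {K L : Type*} [Field K] [Field L] [Algebra K L] [FiniteDimensional K L]
    (σ : L ≃ₐ[K] L) (hfix : ∀ x, σ x = x → ∃ k, algebraMap K L k = x)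
    (p m e : ℕ) (hp : p.Prime) [CharP K p] (he : 2 ≤ e) (hem : e = p ^ m)
    (hr : Module.finrank K L = (e + 1) * e + 1)
    (hn : ∀ x, (σ ^ ((e + 1) * e + 1)) x = x) :
    Module.finrank K (LinearMap.ker (Polynomial.aeval (σ.toLinearMap : Module.End K L)
      (Polynomial.X ^ (e + 1) + Polynomial.X + 1 : Polynomial K))) = e + 1 := by
  have := Fact.mk hp
  have hpow : ∀ i : ℕ, ∀ x : L, ((σ.toLinearMap : Module.End K L) ^ i) x = (σ ^ i) x := by
    intro i
    induction i with
    | zero => intro x; simp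
    | succ i ih => intro x; rw [pow_succ, pow_succ, Module.End.mul_apply, ih]; rfl
  set P : Polynomial K := Polynomial.X ^ (e + 1) + Polynomial.X + 1 with hPdef
  have hdeg : P.natDegree = e + 1 := by
    rw [hPdef]; compute_degree!
    have : e ≠ 0 := by omega
    simp [this]
  have hP0 : P ≠ 0 := by
    intro h; rw [h] at hdeg; simp at hdeg
  have hdvd : P ∣ Polynomial.X ^ ((e + 1) * e + 1) - 1 := by
    have h1 : (Polynomial.X ^ (e + 1) - (-(Polynomial.X + 1)) : Polynomial K) ∣
      (Polynomial.X ^ (e + 1)) ^ e - (-(Polynomial.X + 1)) ^ e := sub_dvd_pow_sub_pow _ _ _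
    have h2 : (-(Polynomial.X + 1) : Polynomial K) ^ e = -(Polynomial.X ^ e + 1) := by
      rw [neg_pow, hem, add_pow_char_pow, one_pow, neg_one_pow_expChar_pow]
      ring
    rw [h2] at h1
    obtain ⟨Q, hQ⟩ := h1
    refine ⟨Polynomial.X * Q - 1, ?_⟩
    rw [hPdef, pow_succ, pow_mul]
    linear_combination Polynomial.X * hQ
  obtain ⟨Q, hQ⟩ := hdvd
  have hN : (Polynomial.X ^ ((e + 1) * e + 1) - 1 : Polynomial K).natDegree = (e + 1) * e + 1 := by
    exact Polynomial.natDegree_X_pow_sub_C (r := (1 : K))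
  have hQ0 : Q ≠ 0 := by
    rintro rfl
    rw [mul_zero] at hQ
    rw [hQ] at hN; simp at hN
  rw [hQ, Polynomial.natDegree_mul hP0 hQ0, hdeg] at hN
  have hker := poly_bound σ hfix P hP0 (LinearMap.ker (Polynomial.aeval (σ.toLinearMap : Module.End K L) P))
    (fun x hx => hx)
  have hran := poly_bound σ hfix Q hQ0 (LinearMap.range (Polynomial.aeval (σ.toLinearMap : Module.End K L) P))
    (by
      rintro _ ⟨x, rfl⟩
      rw [← Module.End.mul_apply, ← map_mul, mul_comm, ← hQ]
      simp [-AlgEquiv.coe_pow, hpow, hn])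
  have hrn := LinearMap.finrank_range_add_finrank_ker (Polynomial.aeval (σ.toLinearMap : Module.End K L) P)
  rw [hr] at hrn
  omega

/-- the trinomial -/
def trin {K L : Type*} [Field K] [Field L] [Algebra K L] (σ : L ≃ₐ[K] L) (d : ℕ) (a b : L) :
    L →ₗ[K] L := LinearMap.mulLeft K a + LinearMap.mulLeft K b ∘ₗ σ.toLinearMap
          - (σ ^ d : L ≃ₐ[K] L).toLinearMap

theorem mem_trin {K L : Type*} [Field K] [Field L] [Algebra K L] (σ : L ≃ₐ[K] L) (d : ℕ)
    (a b x : L) : x ∈ LinearMap.ker (trin σ d a b) ↔ (σ ^ d) x = a * x + b * σ x := by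
  rw [LinearMap.mem_ker, trin, LinearMap.sub_apply, sub_eq_zero, eq_comm]
  rfl

theorem conj_trin {K L : Type*} [Field K] [Field L] [Algebra K L] [FiniteDimensional K L]
    (σ : L ≃ₐ[K] L)
    (e : ℕ) (hfix : ∀ x, (σ ^ (e + 1)) x = x → ∃ k, algebraMap K L k = x)
    (hr : Module.finrank K L = (e + 1) * e + 1)
    (hn : ∀ x, (σ ^ ((e + 1) * e + 1)) x = x) (a b : L)
    (hN : ∏ i ∈ range ((e + 1) * e + 1), (σ ^ i) a = (-1) ^ e)
    (hb : b = - ∏ i ∈ range (e + 1), (σ ^ (i * (e + 1) + 1)) a) :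
    Module.finrank K (LinearMap.ker (trin σ (e + 1) a b)) =
      Module.finrank K (LinearMap.ker (trin σ (e + 1) ((-1) ^ e) (-1))) := by
  set ε : L := (-1) ^ e with hε
  have hε2 : ε * ε = 1 := by rw [hε, ← pow_add, ← two_mul, pow_mul]; simp
  have hε0 : ε ≠ 0 := by intro h; simp [h] at hε2
  have hεd : ε ^ (e + 1) = 1 := by
    rw [hε, ← pow_mul]; exact (Nat.even_mul_succ_self e).neg_one_pow
  have hεn : ε ^ ((e + 1) * e + 1) = ε := by
    rw [pow_succ, pow_mul, hεd]; simp
  have hεσ : ∀ i, (σ ^ i) ε = ε := by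
    intro i; rw [hε, map_pow, map_neg, map_one]
  have ha : a ≠ 0 := by
    rintro rfl
    rw [prod_range_succ', pow_zero, AlgEquiv.one_apply, mul_zero] at hN
    exact hε0 hN.symm
  obtain ⟨g, hg0, hg⟩ := hilb (σ ^ (e + 1)) hfix ((e + 1) * e + 1) (by omega) hr
    (fun x => by
      have : ∀ k : ℕ, ∀ x, (σ ^ ((((e + 1) * e + 1)) * k)) x = x := by
        intro k
        induction k with
        | zero => intro x; simp
        | succ k ih => intro x; rw [mul_add, mul_one, pow_add, AlgEquiv.mul_apply, hn, ih]
      rw [← pow_mul, mul_comm, this]) (ε * a⁻¹) (by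
      simp only [← pow_mul]
      rw [prod_coprime ((e + 1) * e + 1) (e + 1) (by omega) (fun i => (σ ^ i) (ε * a⁻¹))]
      · simp only [map_mul, hεσ, prod_mul_distrib, prod_const, card_range, hεn, map_inv₀,
          prod_inv_distrib, hN]
        exact mul_inv_cancel₀ hε0
      · intro i
        rw [pow_add, AlgEquiv.mul_apply, hn]
      · simp)
  have hag : a * g = ε * (σ ^ (e + 1)) g := by
    conv_lhs => rw [← hg]
    field_simp
  have hk : ∀ k, (∏ i ∈ range k, (σ ^ (i * (e + 1) + 1)) a) * σ g
      = ε ^ k * (σ ^ (k * (e + 1) + 1)) g := by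
    intro k
    induction k with
    | zero => simp
    | succ k ih =>
      have h1 : (σ ^ (k * (e + 1) + 1)) a * (σ ^ (k * (e + 1) + 1)) g
          = ε * (σ ^ ((k + 1) * (e + 1) + 1)) g := by
        rw [← map_mul, hag, map_mul, hεσ, ← AlgEquiv.mul_apply, ← pow_add]
        congr 3; ring
      rw [prod_range_succ, pow_succ ε]
      linear_combination (σ ^ (k * (e + 1) + 1)) a * ih + ε ^ k * h1
  have hbg : b * σ g = - (σ ^ (e + 1)) g := by
    have := hk (e + 1)
    rw [hεd, one_mul, show (e + 1) * (e + 1) + 1 = (e + 1) + ((e + 1) * e + 1) by ring, pow_add,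
      AlgEquiv.mul_apply, hn] at this
    rw [hb, neg_mul, this]
  have hinj : Function.Injective (LinearMap.mulLeft K g) := fun x y h => mul_left_cancel₀ hg0 h
  have hmap : LinearMap.ker (trin σ (e + 1) a b) =
      (LinearMap.ker (trin σ (e + 1) ε (-1))).map
        (LinearEquiv.ofInjectiveEndo (LinearMap.mulLeft K g) hinj : L →ₗ[K] L) := by
    have hgs : (σ ^ (e + 1)) g ≠ 0 := fun h =>
      hg0 ((map_eq_zero_iff _ (σ ^ (e + 1)).injective).mp h)
    have hiff : ∀ y, g * y ∈ LinearMap.ker (trin σ (e + 1) a b) ↔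
        y ∈ LinearMap.ker (trin σ (e + 1) ε (-1)) := by
      intro y
      rw [mem_trin, mem_trin, map_mul, map_mul]
      have : a * (g * y) + b * (σ g * σ y) = (σ ^ (e + 1)) g * (ε * y + -1 * σ y) := by
        linear_combination y * hag + σ y * hbg
      rw [this]
      exact mul_right_inj' hgs
    ext x
    rw [Submodule.mem_map]
    constructor
    · intro hx
      refine ⟨g⁻¹ * x, (hiff _).mp ?_, ?_⟩
      · rwa [mul_inv_cancel_left₀ hg0]
      · exact mul_inv_cancel_left₀ hg0 x
    · rintro ⟨y, hy, rfl⟩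
      exact (hiff y).mpr hy
  rw [hmap]
  exact LinearEquiv.finrank_map_eq _ _

theorem main_aux (p q : ℕ) (hp : p.Prime) (hq : ∃ m : ℕ, 0 < m ∧ q = p ^ m)
    (K L : Type*) [Field K] [Field L] [Fintype K] [Fintype L] [Algebra K L]
    (hcardK : Fintype.card K = q)
    (e : ℕ) (he : 2 ≤ e) (n : ℕ) (hnval : n = (e + 1) * e + 1) (hcardL : Fintype.card L = q ^ n)
    (s : ℕ) (hsn : Nat.gcd s n = 1)
    (σ : L ≃ₐ[K] L) (hσ : ∀ x : L, σ x = x ^ q ^ s)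
    (a b : L) :
    Module.finrank K (LinearMap.ker (trin σ (e + 1) a b)) = e + 1
      ↔ (a ^ ((q ^ n - 1) / (q - 1)) = (-1 : L) ^ e
          ∧ b = - ∏ i ∈ Finset.range (e + 1), (σ ^ (i * (e + 1) + 1)) a
          ∧ ∃ m : ℕ, e = p ^ m) := by
  have := Fact.mk hp
  have hq2 : 2 ≤ q := by rw [← hcardK]; exact Fintype.one_lt_card
  have hchK : CharP K p := by
    obtain ⟨m, hm, rfl⟩ := hq
    exact charP_of_card_eq_prime_pow hcardK
  have hchL : CharP L p := charP_of_injective_algebraMap (algebraMap K L).injective p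
  have : FiniteDimensional K L := Module.Finite.of_finite
  have hr : Module.finrank K L = n := by
    have := Module.card_eq_pow_finrank (K := K) (V := L)
    rw [hcardK, hcardL] at this
    exact (Nat.pow_right_injective hq2 this).symm
  have hLn : ∀ x : L, x ^ q ^ n = x := fun x => by rw [← hcardL]; exact FiniteField.pow_card x
  have hσi : ∀ i : ℕ, ∀ x : L, (σ ^ i) x = x ^ q ^ (s * i) := by
    intro i
    induction i with
    | zero => intro x; simp
    | succ i ih =>
      intro x
      rw [pow_succ, AlgEquiv.mul_apply, ih, hσ, ← pow_mul, ← pow_add]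
      congr 2; ring
  have hper : ∀ i, a ^ q ^ (i + n) = a ^ q ^ i := by
    intro i
    rw [pow_add, mul_comm, pow_mul, hLn]
  have hnn : ∀ x : L, (σ ^ n) x = x := by
    intro x
    rw [hσi, mul_comm]
    have : ∀ k : ℕ, x ^ q ^ (n * k) = x := by
      intro k
      induction k with
      | zero => simp
      | succ k ih => rw [mul_add, mul_one, pow_add, pow_mul, ih, hLn]
    exact this s
  have hfix : ∀ x, σ x = x → ∃ k, algebraMap K L k = x := fun x hx =>
    fix_gen q n s hcardK hLn hsn x (by rw [← hσ]; exact hx)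
  have hen : Nat.gcd (e + 1) n = 1 := by rw [hnval]; simp
  have hfixd : ∀ x, (σ ^ (e + 1)) x = x → ∃ k, algebraMap K L k = x := fun x hx =>
    fix_gen q n (s * (e + 1)) hcardK hLn (Nat.Coprime.mul_left hsn hen) x
      (by rw [← hσi]; exact hx)
  have hn0 : 0 < n := by omega
  have hnorm : a ^ ((q ^ n - 1) / (q - 1)) = ∏ i ∈ range n, (σ ^ i) a := by
    rw [← Nat.geomSum_eq hq2, ← prod_pow_eq_pow_sum, ← prod_coprime n s hn0 _ hper hsn]
    exact prod_congr rfl fun i _ => (hσi i a).symm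
  have hperσ : ∀ i, (σ ^ (i + n)) a = (σ ^ i) a := by
    intro i
    rw [pow_add, AlgEquiv.mul_apply, hnn]
  rw [hnorm]
  subst hnval
  constructor
  · intro hd
    obtain ⟨-, h2, h3⟩ := forward σ a b e he hfix hnn _ hd (fun x hx => (mem_trin _ _ _ _ _).mp hx)
    have hb : b = - ∏ i ∈ Finset.range (e + 1), (σ ^ (i * (e + 1) + 1)) a := by
      have hb1 : b = - (σ (Hc σ (e + 1) a b e 0) * a) := by
        linear_combination a * h3 - b * h2
      rw [hb1, Hc_left, map_prod, prod_range_succ, mul_comm e (e + 1), hnn]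
      congr 2
      refine prod_congr rfl fun i _ => ?_
      rw [← AlgEquiv.mul_apply, ← pow_succ', mul_comm]
    have hN : ∏ i ∈ range ((e + 1) * e + 1), (σ ^ i) a = (-1) ^ e := by
      have h4 : σ (Hc σ (e + 1) a b e e) =
          (-1) ^ e * ∏ i ∈ range e, ∏ j ∈ range (e + 1), (σ ^ ((e + 1) * ((e + 1) * i + j + 1))) a := by
        rw [Hc_diag, map_prod]
        have : ∀ i ∈ range e, σ ((σ ^ (e * i + (e - 1))) b) =
            (-1) * ∏ j ∈ range (e + 1), (σ ^ ((e + 1) * ((e + 1) * i + j + 1))) a := by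
          intro i _
          rw [← AlgEquiv.mul_apply, ← pow_succ', hb, map_neg, map_prod, neg_one_mul]
          congr 1
          refine prod_congr rfl fun j _ => ?_
          rw [← AlgEquiv.mul_apply, ← pow_add]
          have hper2 : ∀ k l, (σ ^ (l + ((e + 1) * e + 1) * k)) a = (σ ^ l) a := by
            intro k l
            induction k with
            | zero => simp
            | succ k ih => rw [mul_add, mul_one, ← add_assoc, hperσ, ih]
          rw [← hper2 i]
          congr 2
          obtain ⟨f, rfl⟩ : ∃ f, e = f + 1 := ⟨e - 1, by omega⟩
          simp only [Nat.add_sub_cancel]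
          ring
        rw [prod_congr rfl this, prod_mul_distrib, prod_const, card_range]
      rw [h4, prod_mul_range e (e + 1) (fun k => (σ ^ ((e + 1) * (k + 1))) a)] at h2
      rw [← prod_coprime _ (e + 1) hn0 (fun i => (σ ^ i) a) hperσ hen, prod_range_succ']
      simp only [mul_zero, pow_zero, AlgEquiv.one_apply]
      have h5 : ((-1 : L) ^ e) * (-1) ^ e = 1 := by rw [← pow_add, ← two_mul, pow_mul]; simp
      set PP := ∏ i ∈ range ((e + 1) * e), (σ ^ ((e + 1) * (i + 1))) a
      linear_combination (-1) ^ e * h2 - PP * a * h5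
    refine ⟨hN, hb, ?_⟩
    rw [conj_trin σ e hfixd hr hnn a b hN hb] at hd
    obtain ⟨h6, -, -⟩ := forward σ _ _ e he hfix hnn _ hd
      (fun x hx => (mem_trin _ _ _ _ _).mp hx)
    refine ⟨_, Choose.eq_pow_multiplicity_of_choose_modEq_zero_nat (p := p) (by omega) ?_⟩
    intro i hi
    rw [mem_Icc] at hi
    have h7 := h6 i hi.1 (by omega)
    rw [Hc_const _ _ _ (neg_one_pow_eq_or L e)] at h7
    have h8 : ((e.choose i : ℕ) : L) = 0 := by
      rcases mul_eq_zero.mp h7 with h | h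
      · rcases mul_eq_zero.mp h with h | h
        · exact h
        · simp [pow_eq_zero_iff'] at h
      · simp [pow_eq_zero_iff'] at h
    exact (Nat.modEq_zero_iff_dvd).mpr ((CharP.cast_eq_zero_iff L p _).mp h8)
  · rintro ⟨hN, hb, m, hm⟩
    rw [conj_trin σ e hfixd hr hnn a b hN hb]
    have hε : (-1 : L) ^ e = -1 := by rw [hm, neg_one_pow_expChar_pow]
    have hpow : ∀ i : ℕ, ∀ x : L, ((σ.toLinearMap : Module.End K L) ^ i) x = (σ ^ i) x := by
      intro i
      induction i with
      | zero => intro x; simp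
      | succ i ih => intro x; rw [pow_succ, pow_succ, Module.End.mul_apply, ih]; rfl
    have hmain := backward0 σ hfix p m e hp he hm hr hnn
    suffices hs : LinearMap.ker (trin σ (e + 1) ((-1 : L) ^ e) (-1)) =
        LinearMap.ker (Polynomial.aeval (σ.toLinearMap : Module.End K L)
          (Polynomial.X ^ (e + 1) + Polynomial.X + 1 : Polynomial K)) by
      rw [hs]; exact hmain
    ext x
    rw [mem_trin, LinearMap.mem_ker, hε]
    simp only [map_add, map_pow, map_one, Polynomial.aeval_X, LinearMap.add_apply, hpow,
      Module.End.one_apply, AlgEquiv.toLinearMap_apply]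
    constructor
    · intro h; rw [h]; ring
    · intro h; linear_combination h

end Aux


/-- With `σ : x ↦ x^{q^s}`, `gcd(s,n)=1`, `d ≥ 3` and `n = d(d-1)+1`:
the `F_q`-dimension of the kernel of `x ↦ a·x + b·σ(x) − σ^d(x)` equals `d` if and only if
`N_{q^n/q}(a) = (-1)^{d-1}`, `b = -∏_{i=0}^{d-1} σ^{id+1}(a)`, and `d-1` is a power of the
characteristic `p`. -/
theorem stmt_2 (p q : ℕ) (hp : p.Prime) (hq : ∃ m : ℕ, 0 < m ∧ q = p ^ m)
    (K L : Type*) [Field K] [Field L] [Fintype K] [Fintype L] [Algebra K L]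
    (hcardK : Fintype.card K = q)
    (n : ℕ) (hn : 0 < n) (hcardL : Fintype.card L = q ^ n)
    (s : ℕ) (hs : 0 < s) (hsn : Nat.gcd s n = 1)
    (σ : L ≃ₐ[K] L) (hσ : ∀ x : L, σ x = x ^ q ^ s)
    (d : ℕ) (hd : 3 ≤ d) (hnval : n = d * (d - 1) + 1)
    (a b : L) :
    Module.finrank K
      (LinearMap.ker
        (LinearMap.mulLeft K a + LinearMap.mulLeft K b ∘ₗ σ.toLinearMap
          - (σ ^ d : L ≃ₐ[K] L).toLinearMap)) = d
      ↔ (a ^ ((q ^ n - 1) / (q - 1)) = (-1 : L) ^ (d - 1)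
          ∧ b = - ∏ i ∈ Finset.range d, (σ ^ (i * d + 1)) a
          ∧ ∃ m : ℕ, d - 1 = p ^ m) := by
  obtain ⟨e, rfl⟩ : ∃ e, d = e + 1 := ⟨d - 1, by omega⟩
  exact Aux.main_aux p q hp hq K L hcardK e (by omega) n hnval hcardL s hsn σ hσ a b
end

section
/- Let d, n, s be positive integers with gcd(s,n)=1, d ≥ 3 and n = d(d−1)+g for some g ∈ {1,…,d−1}, and let a, b ∈ F_{q^n}. If the F_q-dimension of the kernel of a·x + b·x^σ − x^{σ^d} equals d, then a ≠ 0 and the following two equations hold: (∏_{i=0}^{g−1} σ^i(b)) · (∏_{i=0}^{g−1} σ^i(a))^{−1} = (−1)^g · ∏_{i=0}^{d−2} σ^{g+id}(a), and (∏_{i=0}^{g−2} σ^i(b)) · (∏_{i=0}^{g−1} σ^i(a))^{−1} = (−1)^{g−1} · ∏_{i=1}^{d−1} σ^{g−1+(d−1)i}(b), where empty products equal 1 and powers of σ are taken modulo n. -/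
lemma fixed_aux {K L : Type*} [Field K] [Field L] [Fintype K] [Fintype L] [Algebra K L]
    (q n s : ℕ) (hcardK : Fintype.card K = q) (hcardL : Fintype.card L = q ^ n)
    (hsn : Nat.gcd s n = 1) (z : L) (hz : z ^ q ^ s = z) :
    ∃ c : K, algebraMap K L c = z := by
  have h1 : Function.IsPeriodicPt (fun x : L => x ^ q) s z := by
    unfold Function.IsPeriodicPt Function.IsFixedPt
    rw [pow_iterate]; exact hz
  have h2 : Function.IsPeriodicPt (fun x : L => x ^ q) n z := by
    unfold Function.IsPeriodicPt Function.IsFixedPt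
    rw [pow_iterate]
    show z ^ q ^ n = z
    rw [← hcardL]; exact FiniteField.pow_card z
  have h3 := h1.gcd h2
  rw [hsn] at h3
  have h4 : z ^ q = z := by simpa [Function.IsPeriodicPt, Function.IsFixedPt] using h3
  have hq1 : 1 < q := hcardK ▸ Fintype.one_lt_card
  have hne : (Polynomial.X ^ q - Polynomial.X : Polynomial L) ≠ 0 :=
    FiniteField.X_pow_card_sub_X_ne_zero L hq1
  classical
  have hsub : (Finset.univ.image (algebraMap K L)) ⊆
      (Polynomial.X ^ q - Polynomial.X : Polynomial L).roots.toFinset := by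
    intro y hy
    obtain ⟨c, -, rfl⟩ := Finset.mem_image.1 hy
    rw [Multiset.mem_toFinset, Polynomial.mem_roots hne]
    simp [← map_pow, ← hcardK, FiniteField.pow_card]
  have hcard : (Polynomial.X ^ q - Polynomial.X : Polynomial L).roots.toFinset.card
      ≤ (Finset.univ.image (algebraMap K L)).card := by
    rw [Finset.card_image_of_injective _ (algebraMap K L).injective, Finset.card_univ, hcardK]
    refine (Multiset.toFinset_card_le _).trans ((Polynomial.card_roots' _).trans ?_)
    rw [FiniteField.X_pow_card_sub_X_natDegree_eq L hq1]
  have heq := Finset.eq_of_subset_of_card_le hsub hcard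
  have hzm : z ∈ (Finset.univ.image (algebraMap K L)) := by
    rw [heq, Multiset.mem_toFinset, Polynomial.mem_roots hne]
    simp [h4]
  obtain ⟨c, -, hc⟩ := Finset.mem_image.1 hzm
  exact ⟨c, hc⟩

lemma indep_aux {K L : Type*} [Field K] [Field L] [Algebra K L] [FiniteDimensional K L]
    (σ : L ≃ₐ[K] L) (hfix : ∀ z : L, σ z = z → ∃ c : K, algebraMap K L c = z) :
    ∀ (m : ℕ) (e : ℕ → L) (W : Submodule K L), m ≤ Module.finrank K W →
      (∀ x ∈ W, ∑ j ∈ Finset.range m, e j * (σ ^ j) x = 0) → ∀ j < m, e j = 0 := by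
  intro m
  induction m with
  | zero => intro e W _ _ j hj; omega
  | succ m ih =>
    intro e W hW h
    have hpos : 0 < Module.finrank K W := by omega
    obtain ⟨⟨v, hvW⟩, hv0⟩ := (Module.finrank_pos_iff_exists_ne_zero (R := K) (M := W)).1 hpos
    have hv : v ≠ 0 := fun h => hv0 (by ext; exact h)
    let T : L →ₗ[K] L := σ.toLinearMap ∘ₗ LinearMap.mulLeft K v⁻¹ - LinearMap.mulLeft K v⁻¹
    have hT : ∀ y, T y = σ (v⁻¹ * y) - v⁻¹ * y := fun y => rfl
    let e' : ℕ → L := fun j => e j * (σ ^ j) v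
    let H : ℕ → L := fun j => ∑ i ∈ Finset.range (j+1), e' i
    have key : ∀ (z : L) (k : ℕ), ∑ j ∈ Finset.range (k+1), e' j * (σ ^ j) z
        = H k * (σ ^ k) z - ∑ j ∈ Finset.range k, H j * (σ ^ j) (σ z - z) := by
      intro z k
      induction k with
      | zero => simp [H]
      | succ k ihk =>
        rw [Finset.sum_range_succ, ihk, Finset.sum_range_succ _ k]
        have : H (k+1) = H k + e' (k+1) := Finset.sum_range_succ _ _
        rw [this]
        have h2 : (σ ^ k) (σ z) = (σ ^ (k+1)) z := by rw [pow_succ]; rfl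
        rw [map_sub, h2]; ring
    have hsc : ∀ z, v * z ∈ W → ∑ j ∈ Finset.range (m+1), e' j * (σ ^ j) z = 0 := by
      intro z hz
      rw [← h _ hz]
      apply Finset.sum_congr rfl
      intro j _
      simp only [e', map_mul]; ring
    have hHm : H m = 0 := by
      have := hsc 1 (by simpa using hvW)
      simpa [H] using this
    have hker : Module.finrank K (LinearMap.ker (T.domRestrict W)) ≤ 1 := by
      have hvk : (⟨v, hvW⟩ : W) ∈ LinearMap.ker (T.domRestrict W) := by
        rw [LinearMap.mem_ker, LinearMap.domRestrict_apply, hT]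
        simp [hv]
      refine finrank_le_one ⟨⟨v, hvW⟩, hvk⟩ ?_
      rintro ⟨⟨w, hwW⟩, hw⟩
      rw [LinearMap.mem_ker, LinearMap.domRestrict_apply, hT, sub_eq_zero] at hw
      obtain ⟨c, hc⟩ := hfix _ hw
      refine ⟨c, ?_⟩
      ext
      simp only [Submodule.coe_smul, Algebra.smul_def, hc]
      field_simp
    have hrn := LinearMap.finrank_range_add_finrank_ker (T.domRestrict W)
    have hr : LinearMap.range (T.domRestrict W) = W.map T := by
      ext y; simp [LinearMap.mem_range]
    rw [hr] at hrn
    have hH : ∀ j < m, H j = 0 := by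
      apply ih H (W.map T) (by omega)
      rintro _ ⟨x, hx, rfl⟩
      have h1 := hsc (v⁻¹ * x) (by rwa [mul_inv_cancel_left₀ hv])
      rw [key, hHm, zero_mul, zero_sub, neg_eq_zero] at h1
      exact h1
    have hH' : ∀ j < m + 1, H j = 0 := by
      intro j hj
      rcases Nat.lt_succ_iff_lt_or_eq.1 hj with h | rfl
      · exact hH j h
      · exact hHm
    intro j hj
    have : e' j = 0 := by
      cases j with
      | zero => simpa [H] using hH' 0 hj
      | succ j =>
        have h1 : H (j+1) = H j + e' (j+1) := Finset.sum_range_succ _ _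
        rw [hH' _ hj, hH' j (by omega), zero_add] at h1
        exact h1.symm
    rcases mul_eq_zero.1 this with h | h
    · exact h
    · exact absurd ((map_eq_zero_iff _ (σ ^ j).injective).1 h) hv

/-- coefficients of `σ^k` modulo the relation, with `d = e + 3`, top coefficient index `t = d-1`. -/
def cc {L : Type*} [Field L] (σ : L → L) (a b : L) (t : ℕ) : ℕ → ℕ → L
  | 0, 0 => 1
  | 0, _ + 1 => 0
  | k + 1, 0 => a * σ (cc σ a b t k t)
  | k + 1, 1 => σ (cc σ a b t k 0) + b * σ (cc σ a b t k t)
  | k + 1, j + 2 => σ (cc σ a b t k (j + 1))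

section
variable {K L : Type*} [Field K] [Field L] [Algebra K L] (σ : L ≃ₐ[K] L) (a b : L) (t : ℕ)

lemma pow_app_succ (k : ℕ) (x : L) : (σ ^ (k+1)) x = σ ((σ ^ k) x) := by
  rw [pow_succ']; rfl

lemma pow_app_add (k l : ℕ) (x : L) : (σ ^ (k+l)) x = (σ ^ k) ((σ ^ l) x) := by
  rw [pow_add]; rfl

lemma cc_shift (k j m : ℕ) : cc σ a b t (k+m) (j+1+m) = (σ ^ m) (cc σ a b t k (j+1)) := by
  induction m with
  | zero => simp
  | succ m ih =>
    rw [pow_app_succ, ← ih, ← add_assoc, show j + 1 + (m+1) = (j+m)+2 by ring, cc]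
    congr 2; ring

lemma cc_red (k : ℕ) (x : L) (hx : (σ ^ (t+2)) x = a * x + b * σ x) :
    (σ ^ k) x = ∑ j ∈ Finset.range (t+2), cc σ a b (t+1) k j * (σ ^ j) x := by
  induction k with
  | zero => rw [Finset.sum_range_succ']; simp [cc]
  | succ k ih =>
    rw [pow_app_succ, ih, map_sum, Finset.sum_range_succ, Finset.sum_range_succ',
      Finset.sum_range_succ', Finset.sum_range_succ']
    simp only [map_mul, ← pow_app_succ, cc]
    rw [hx]
    simp; ring

lemma u_rec (k : ℕ) : cc σ a b (t+1) (k+(t+2)) (t+1)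
    = (σ ^ t) (σ a * σ (σ (cc σ a b (t+1) k (t+1))) + b * σ (cc σ a b (t+1) (k+1) (t+1))) := by
  have := cc_shift σ a b (t+1) (k+2) 0 t
  rw [show k + 2 + t = k + (t+2) by ring, show 0 + 1 + t = t+1 by ring] at this
  rw [this]; simp [cc]

lemma u_small (k : ℕ) (hk : k < t+1) : cc σ a b (t+1) k (t+1) = 0 := by
  obtain ⟨j, rfl⟩ : ∃ j, t = j + k := ⟨t - k, by omega⟩
  have := cc_shift σ a b (j+k+1) 0 j k
  rw [zero_add, show j + 1 + k = j+k+1 by ring] at this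
  rw [this]; simp [cc]

lemma u_one : cc σ a b (t+1) (t+1) (t+1) = 1 := by
  have := cc_shift σ a b (t+1) 1 0 t
  rw [zero_add, add_comm 1 t] at this
  rw [this]; simp [cc]

lemma u_zero (T : ℕ) : ∀ r, T ≤ r → r < t + 1 → cc σ a b (t+1) ((t+1)*T+r) (t+1) = 0 := by
  induction T with
  | zero => intro r _ h; simpa using u_small σ a b t r h
  | succ T ih =>
    intro r h1 h2
    obtain ⟨r, rfl⟩ : ∃ r', r = r' + 1 := ⟨r - 1, by omega⟩
    rw [show (t+1)*(T+1)+(r+1) = ((t+1)*T+r) + (t+2) by ring, u_rec, ih r (by omega) (by omega),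
      add_assoc, ih (r+1) (by omega) h2]
    simp

lemma u_A (i : ℕ) (hi : i < t + 1) : cc σ a b (t+1) (t+1+(t+2)*i) (t+1)
    = ∏ l ∈ Finset.range i, (σ ^ (t+1+l*(t+2))) a := by
  induction i with
  | zero => simpa using u_one σ a b t
  | succ i ih =>
    rw [show t+1+(t+2)*(i+1) = (t+1+(t+2)*i) + (t+2) by ring, u_rec, ih (by omega),
      show t+1+(t+2)*i+1 = (t+1)*(i+1)+(i+1) by ring, u_zero σ a b t _ _ le_rfl hi,
      Finset.prod_range_succ']
    simp only [map_zero, mul_zero, add_zero, map_mul, map_prod, ← pow_app_succ, ← pow_app_add]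
    rw [mul_comm]
    congr 1
    · apply Finset.prod_congr rfl
      intro l _
      congr 2; ring
    · simp [pow_succ]

lemma u_B (i : ℕ) (hi : i ≤ t + 1) : cc σ a b (t+1) (t+1+(t+1)*i) (t+1)
    = ∏ l ∈ Finset.range i, (σ ^ (t+l*(t+1))) b := by
  induction i with
  | zero => simpa using u_one σ a b t
  | succ i ih =>
    rw [show t+1+(t+1)*(i+1) = ((t+1)*i+t) + (t+2) by ring, u_rec,
      u_zero σ a b t i t (by omega) (by omega),
      show (t+1)*i+t+1 = t+1+(t+1)*i by ring, ih (by omega), 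
      Finset.prod_range_succ']
    simp only [map_zero, mul_zero, zero_add, map_mul, map_prod, ← pow_app_succ, ← pow_app_add]
    rw [mul_comm]
    congr 1
    · apply Finset.prod_congr rfl
      intro l _
      congr 2; ring
    · simp

lemma X_lem (n : ℕ) (ha : a ≠ 0) (h0 : cc σ a b (t+1) n 0 = 1)
    (hj : ∀ j, 1 ≤ j → j < t+2 → cc σ a b (t+1) n j = 0) (j : ℕ) (hjt : j < t+2)
    (hjn : j < n) :
    (σ ^ j) (a * σ (cc σ a b (t+1) (n-1-j) (t+1))) * ∏ i ∈ Finset.range j, (σ ^ i) a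
      = (-1) ^ j * ∏ i ∈ Finset.range j, (σ ^ i) b := by
  induction j with
  | zero =>
    obtain ⟨n, rfl⟩ : ∃ m, n = m + 1 := ⟨n - 1, by omega⟩
    simpa [cc] using h0
  | succ j ih =>
    have ih := ih (by omega) (by omega)
    obtain ⟨N, rfl⟩ : ∃ m, n = m + 1 + 1 + j := ⟨n - 2 - j, by omega⟩
    have h1 := hj (j+1) (by omega) hjt
    have h2 := cc_shift σ a b (t+1) (N+1+1) 0 j
    rw [show 0+1+j = j+1 by ring, h1] at h2
    have h3 := (map_eq_zero_iff _ (σ ^ j).injective).1 h2.symm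
    simp only [zero_add, cc] at h3
    rw [show N+1+1+j-1-j = N+1 by omega] at ih
    rw [show N+1+1+j-1-(j+1) = N by omega, Finset.prod_range_succ, Finset.prod_range_succ]
    have h4 := congrArg (σ ^ j) h3
    rw [map_add, map_zero, ← AlgEquiv.mul_apply, ← pow_succ, map_mul _ b] at h4
    rw [map_mul _ a (σ _)] at ih
    generalize (σ ^ (j+1)) (a * σ (cc σ a b (t+1) N (t+1))) = Y at *
    linear_combination (∏ i ∈ Finset.range j, (σ ^ i) a) * (σ ^ j) a * h4 - (σ ^ j) b * ih
end

theorem stmt_4 (p q : ℕ) (hp : p.Prime) (hq : ∃ m : ℕ, 0 < m ∧ q = p ^ m)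
    (K L : Type*) [Field K] [Field L] [Fintype K] [Fintype L] [Algebra K L]
    (hcardK : Fintype.card K = q)
    (n : ℕ) (hn : 0 < n) (hcardL : Fintype.card L = q ^ n)
    (s : ℕ) (hs : 0 < s) (hsn : Nat.gcd s n = 1)
    (σ : L ≃ₐ[K] L) (hσ : ∀ x : L, σ x = x ^ q ^ s)
    (d g : ℕ) (hd : 3 ≤ d) (hg1 : 1 ≤ g) (hg2 : g ≤ d - 1)
    (hnval : n = d * (d - 1) + g)
    (a b : L)
    (hker : Module.finrank K
      (LinearMap.ker
        (LinearMap.mulLeft K a + LinearMap.mulLeft K b ∘ₗ σ.toLinearMap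
          - (σ ^ d : L ≃ₐ[K] L).toLinearMap)) = d) :
    a ≠ 0
      ∧ (∏ i ∈ Finset.range g, (σ ^ i) b) * (∏ i ∈ Finset.range g, (σ ^ i) a)⁻¹
          = (-1 : L) ^ g * ∏ i ∈ Finset.range (d - 1), (σ ^ (g + i * d)) a
      ∧ (∏ i ∈ Finset.range (g - 1), (σ ^ i) b) * (∏ i ∈ Finset.range g, (σ ^ i) a)⁻¹
          = (-1 : L) ^ (g - 1)
            * ∏ i ∈ Finset.Icc 1 (d - 1), (σ ^ (g - 1 + (d - 1) * i)) b := by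
  obtain ⟨t, rfl⟩ : ∃ t, d = t + 2 := ⟨d - 2, by omega⟩
  simp only [show t + 2 - 1 = t + 1 by omega] at *
  have hfix : ∀ z : L, σ z = z → ∃ c : K, algebraMap K L c = z := fun z hz =>
    fixed_aux q n s hcardK hcardL hsn z (by rw [← hσ]; exact hz)
  have hpow : ∀ k (x : L), (σ ^ k) x = x ^ q ^ (s * k) := by
    intro k x
    induction k with
    | zero => simp
    | succ k ih => rw [pow_app_succ, ih, hσ, ← pow_mul, ← pow_add]; congr 2
  have hσn : ∀ x : L, (σ ^ n) x = x := by
    intro x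
    rw [hpow, mul_comm, pow_mul, ← hcardL]
    exact FiniteField.pow_card_pow s x
  have hind := indep_aux σ hfix (t+2)
    (fun j => cc σ a b (t+1) n j - if j = 0 then 1 else 0) _ hker.ge (by
      intro x hx
      have hx' : (σ ^ (t+2)) x = a * x + b * σ x := by
        rw [LinearMap.mem_ker] at hx
        exact (sub_eq_zero.1 hx).symm
      have h1 := cc_red σ a b t n x hx'
      rw [hσn] at h1
      simp only [sub_mul, Finset.sum_sub_distrib, ← h1]
      simp)
  have h0 : cc σ a b (t+1) n 0 = 1 := by
    have := hind 0 (by omega)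
    simpa [sub_eq_zero] using this
  have hj : ∀ j, 1 ≤ j → j < t+2 → cc σ a b (t+1) n j = 0 := by
    intro j h1 h2
    have := hind j h2
    simpa [show j ≠ 0 by omega] using this
  have ha : a ≠ 0 := by
    rintro rfl
    obtain ⟨n, rfl⟩ : ∃ m, n = m + 1 := ⟨n - 1, by omega⟩
    simp [cc] at h0
  have hprod : ∀ k, ∏ i ∈ Finset.range k, (σ ^ i) a ≠ 0 := by
    intro k
    rw [Finset.prod_ne_zero_iff]
    intro i _ h
    exact ha ((map_eq_zero_iff _ (σ ^ i).injective).1 h)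
  have hsq : ∀ k : ℕ, ((-1 : L) ^ k) * (-1) ^ k = 1 := by
    intro k; rw [← mul_pow]; simp
  have hgn : g < n := by rw [hnval]; nlinarith
  refine ⟨ha, ?_, ?_⟩
  · have hX := X_lem σ a b t n ha h0 hj g (by omega) hgn
    have hidx : n - 1 - g = t + 1 + (t+2)*t := by
      have : (t+2)*(t+1) = t + 1 + (t+2)*t + 1 := by ring
      omega
    rw [hidx, u_A σ a b t t (by omega)] at hX
    have hP : (σ ^ g) (a * σ (∏ l ∈ Finset.range t, (σ ^ (t+1+l*(t+2))) a))
        = ∏ i ∈ Finset.range (t+1), (σ ^ (g + i * (t+2))) a := by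
      rw [Finset.prod_range_succ']
      simp only [map_mul, map_prod, ← pow_app_succ, ← pow_app_add]
      rw [mul_comm]
      congr 1
      · apply Finset.prod_congr rfl
        intro l _
        congr 2; ring
      · simp
    rw [hP] at hX
    rw [← div_eq_mul_inv, div_eq_iff (hprod g), mul_assoc, hX, ← mul_assoc, hsq, one_mul]
  · obtain ⟨g, rfl⟩ : ∃ m, g = m + 1 := ⟨g - 1, by omega⟩
    have hX := X_lem σ a b t n ha h0 hj g (by omega) (by omega)
    have hidx : n - 1 - g = t + 1 + (t+1)*(t+1) := by
      have : (t+2)*(t+1) = t + 1 + (t+1)*(t+1) := by ring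
      omega
    rw [hidx, u_B σ a b t (t+1) le_rfl] at hX
    have hP : (σ ^ g) (σ (∏ l ∈ Finset.range (t+1), (σ ^ (t+l*(t+1))) b))
        = ∏ i ∈ Finset.Icc 1 (t+1), (σ ^ (g + (t+1) * i)) b := by
      rw [← Finset.Ico_add_one_right_eq_Icc, Finset.prod_Ico_eq_prod_range]
      simp only [map_prod, ← pow_app_succ, ← pow_app_add]
      apply Finset.prod_congr (by simp)
      intro l _
      congr 2; ring
    rw [map_mul, hP] at hX
    rw [← div_eq_mul_inv, div_eq_iff (hprod _), mul_assoc, Finset.prod_range_succ]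
    simp only [Nat.add_sub_cancel]
    linear_combination (-(-1)^g) * hX - (∏ i ∈ Finset.range g, (σ ^ i) b) * hsq g
end

section
/- Let q be even, let d ≥ 4 be a power of 2, let n = d²−1 = (d−1)d + (d−1), and let s be a positive integer with gcd(s,n)=1. Let a ∈ F_{q^n} with N_{q^n/q}(a) = 1 and set b = (∏_{i=1}^{d−1} σ^{id}(a))^{−1}. Then the F_q-dimension of the kernel of the σ-linearized polynomial −x^{σ^d} + b·x^σ + a·x equals d. -/
open Polynomial in
lemma aux_ker_le {K L : Type*} [Field K] [Field L] [Algebra K L] [FiniteDimensional K L]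
    (σ : L ≃ₐ[K] L) (hord : orderOf σ = Module.finrank K L) (h : K[X]) (h0 : h ≠ 0)
    (hdeg : h.natDegree ≤ Module.finrank K L) :
    Module.finrank K (LinearMap.ker (aeval (σ.toLinearMap : Module.End K L) h)) ≤ h.natDegree := by
  set n := Module.finrank K L with hn
  set S : Module.End K L := σ.toLinearMap with hS
  obtain ⟨α, hα⟩ := exists_linearIndependent_algEquiv_apply K L
  have hSp : ∀ (i : ℕ) (x : L), (S ^ i) x = (σ ^ i) x := by
    intro i
    induction i with
    | zero => intro x; rfl
    | succ k ih => intro x; rw [pow_succ, pow_succ, Module.End.mul_apply, AlgEquiv.mul_apply, ih]; rfl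
  have hli : LinearIndependent K (fun i : Fin n => (σ ^ (i : ℕ)) α) := by
    refine hα.comp (fun i : Fin n => σ ^ (i : ℕ)) ?_
    intro i j hij
    apply Fin.ext
    apply pow_injOn_Iio_orderOf (x := σ) _ _ hij
    · simp [hord]
    · simp [hord]
  have key : ∀ r : K[X], r.degree < n → aeval S r α = 0 → r = 0 := by
    intro r hr h1
    rw [aeval_eq_sum_range' (n := n) ?_, LinearMap.sum_apply, ← Fin.sum_univ_eq_sum_range
      (fun i => (r.coeff i • S ^ i) α)] at h1
    · have h2 := Fintype.linearIndependent_iff.1 hli (fun i => r.coeff i) (by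
        simpa [hSp] using h1)
      ext i
      by_cases hi : i < n
      · simpa using h2 ⟨i, hi⟩
      · rw [coeff_eq_zero_of_degree_lt, coeff_zero]
        exact hr.trans_le (by exact_mod_cast not_lt.1 hi)
    · have : 0 < n := Module.finrank_pos
      by_cases hr0 : r = 0
      · simpa [hr0]
      · rwa [natDegree_lt_iff_degree_lt hr0]
  let φ : degreeLT K (n - h.natDegree) →ₗ[K] L :=
    (LinearMap.applyₗ α ∘ₗ LinearMap.mulLeft K (aeval S h) ∘ₗ (aeval S).toLinearMap) ∘ₗ
      (degreeLT K (n - h.natDegree)).subtype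
  have hφ : ∀ p, φ p = aeval S h (aeval S (p : K[X]) α) := fun p => rfl
  have hinj : Function.Injective φ := by
    rw [← LinearMap.ker_eq_bot, LinearMap.ker_eq_bot']
    intro p hp
    rw [hφ, ← Module.End.mul_apply, ← map_mul] at hp
    by_contra hne
    have hp0 : (p : K[X]) ≠ 0 := by simpa using hne
    have hpd := mem_degreeLT.1 p.2
    rw [degree_eq_natDegree hp0] at hpd
    have hpd' : (p : K[X]).natDegree < n - h.natDegree := by exact_mod_cast hpd
    have := key _ (by
      rw [degree_mul, degree_eq_natDegree hp0, degree_eq_natDegree h0]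
      norm_cast
      omega) hp
    exact (mul_ne_zero h0 hp0) this
  have h1 := LinearMap.finrank_range_of_inj hinj
  have h2 : LinearMap.range φ ≤ LinearMap.range (aeval S h) := by
    rintro _ ⟨p, rfl⟩
    exact ⟨_, (hφ p).symm⟩
  have h3 := Submodule.finrank_mono h2
  have h4 := LinearMap.finrank_range_add_finrank_ker (aeval S h)
  rw [h1, (degreeLTEquiv K (n - h.natDegree)).finrank_eq, Module.finrank_fin_fun] at h3
  omega

open Polynomial in
lemma aux_ker_eq {K L : Type*} [Field K] [Field L] [Algebra K L] [FiniteDimensional K L]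
    (σ : L ≃ₐ[K] L) (hord : orderOf σ = Module.finrank K L) (h : K[X])
    (hdvd : h ∣ X ^ (Module.finrank K L) - 1) :
    Module.finrank K (LinearMap.ker (aeval (σ.toLinearMap : Module.End K L) h)) = h.natDegree := by
  obtain ⟨g, hg⟩ := hdvd
  have hpos : 0 < Module.finrank K L := Module.finrank_pos
  have hne : (X ^ (Module.finrank K L) - 1 : K[X]) ≠ 0 := by
    simpa using X_pow_sub_C_ne_zero hpos (1 : K)
  have hdeg : (X ^ (Module.finrank K L) - 1 : K[X]).natDegree = Module.finrank K L := by
    simpa using natDegree_X_pow_sub_C (n := Module.finrank K L) (r := (1 : K))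
  have hh : h ≠ 0 := by rintro rfl; simp [hg] at hne
  have hg0 : g ≠ 0 := by rintro rfl; simp [hg] at hne
  rw [hg, natDegree_mul hh hg0] at hdeg
  have h1 := aux_ker_le σ hord h hh (by omega)
  have h2 := aux_ker_le σ hord g hg0 (by omega)
  have h4 := LinearMap.finrank_range_add_finrank_ker (aeval (σ.toLinearMap : Module.End K L) h)
  have h5 : LinearMap.range (aeval (σ.toLinearMap : Module.End K L) h) ≤
      LinearMap.ker (aeval (σ.toLinearMap : Module.End K L) g) := by
    rintro _ ⟨x, rfl⟩
    rw [LinearMap.mem_ker, ← Module.End.mul_apply, ← map_mul, mul_comm, ← hg]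
    have hSp : ∀ (i : ℕ) (x : L), ((σ.toLinearMap : Module.End K L) ^ i) x = (σ ^ i) x := by
      intro i
      induction i with
      | zero => intro x; rfl
      | succ k ih => intro x; rw [pow_succ, pow_succ, Module.End.mul_apply, AlgEquiv.mul_apply, ih]; rfl
    simp only [map_sub, map_pow, aeval_X, map_one, LinearMap.sub_apply, hSp, ← hord,
      pow_orderOf_eq_one]
    simp
  have h6 := Submodule.finrank_mono h5
  omega

lemma aux_orderOf {K L : Type*} [Field K] [Field L] [Fintype K] [Fintype L] [Algebra K L]
    (s : ℕ) (hs : Nat.Coprime s (Module.finrank K L)) (σ : L ≃ₐ[K] L)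
    (hσ : ∀ x : L, σ x = x ^ Fintype.card K ^ s) : orderOf σ = Module.finrank K L := by
  have : σ = (FiniteField.frobeniusAlgEquivOfAlgebraic K L) ^ s := by
    ext x
    rw [hσ, AlgEquiv.coe_pow, FiniteField.coe_frobeniusAlgEquivOfAlgebraic_iterate]
  rw [this, Nat.Coprime.orderOf_pow, FiniteField.orderOf_frobeniusAlgEquivOfAlgebraic]
  rw [FiniteField.orderOf_frobeniusAlgEquivOfAlgebraic]
  exact hs.symm

lemma aux_h90 {L : Type*} [Field L] [Fintype L] (q n t : ℕ) (hq : 2 ≤ q)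
    (hcard : Fintype.card L = q ^ n) (hn : 0 < n) (ht : Nat.gcd t n = 1)
    (a : L) (ha : a ^ ((q ^ n - 1) / (q - 1)) = 1) : ∃ c : L, c ≠ 0 ∧ c ^ q ^ t = a * c := by
  have hk : Nat.gcd (q ^ t - 1) (q ^ n - 1) = q - 1 := by
    rw [Nat.pow_sub_one_gcd_pow_sub_one, ht, pow_one]
  have hdvd : q - 1 ∣ q ^ n - 1 := hk ▸ Nat.gcd_dvd_right _ _
  obtain ⟨m, hm⟩ := hdvd
  have hqn : q ≤ q ^ n := Nat.le_self_pow hn.ne' q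
  have hm0 : 0 < m := by
    rcases Nat.eq_zero_or_pos m with h | h
    · subst h; omega
    · exact h
  rw [hm, Nat.mul_div_cancel_left _ (by omega)] at ha
  have ha0 : a ≠ 0 := by rintro rfl; simp [hm0.ne'] at ha
  have hcu : Nat.card Lˣ = (q - 1) * m := by
    rw [Nat.card_units, Nat.card_eq_fintype_card, hcard, hm]
  obtain ⟨g, hg⟩ := IsCyclic.exists_generator (α := Lˣ)
  have hog := orderOf_eq_card_of_forall_mem_zpowers hg
  obtain ⟨j, hj⟩ := (hg (Units.mk0 a ha0))
  have hj' : g ^ j = Units.mk0 a ha0 := hj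
  have hau : (Units.mk0 a ha0) ^ m = 1 := by ext; simpa using ha
  rw [← hj', ← zpow_natCast, ← zpow_mul, ← orderOf_dvd_iff_zpow_eq_one, hog, hcu] at hau
  push_cast at hau
  obtain ⟨l, rfl⟩ := Int.dvd_of_mul_dvd_mul_right (by exact_mod_cast hm0.ne') hau
  have hbez := Nat.gcd_eq_gcd_ab (q ^ t - 1) (q ^ n - 1)
  rw [hk] at hbez
  set u := Nat.gcdA (q ^ t - 1) (q ^ n - 1)
  set v := Nat.gcdB (q ^ t - 1) (q ^ n - 1)
  have hgN : g ^ (((q ^ n - 1 : ℕ) : ℤ)) = 1 := by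
    rw [zpow_natCast, hm, ← hcu, ← hog, pow_orderOf_eq_one]
  refine ⟨((g ^ (u * l) : Lˣ) : L), Units.ne_zero _, ?_⟩
  have h1 : (g ^ (u * l)) ^ (q ^ t - 1) = Units.mk0 a ha0 := by
    rw [← hj', ← zpow_natCast, ← zpow_mul, hbez, add_mul, zpow_add,
      mul_assoc (((q ^ n - 1 : ℕ) : ℤ)), zpow_mul g (((q ^ n - 1 : ℕ) : ℤ)), hgN, one_zpow, mul_one]
    congr 1
    ring
  have h2 : (g ^ (u * l)) ^ (q ^ t) = Units.mk0 a ha0 * g ^ (u * l) := by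
    rw [← h1, ← pow_succ, Nat.sub_add_cancel (Nat.one_le_pow _ _ (by omega))]
  simpa using congrArg Units.val h2

open Polynomial in
lemma aux_dvd {K : Type*} [Field K] [CharP K 2] (d : ℕ) (hd : 4 ≤ d) (hd2 : ∃ m : ℕ, d = 2 ^ m) :
    (X ^ d - X - 1 : K[X]) ∣ X ^ (d ^ 2 - 1) - 1 := by
  have hcop : IsCoprime (X ^ d - X - 1 : K[X]) X := by
    refine ⟨-1, X ^ (d - 1) - 1, ?_⟩
    have : (X : K[X]) ^ d = X ^ (d - 1) * X := by rw [← pow_succ, Nat.sub_add_cancel (by omega)]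
    rw [this]; ring
  refine hcop.dvd_of_dvd_mul_right (?_ : (X ^ d - X - 1 : K[X]) ∣ (X ^ (d ^ 2 - 1) - 1 : K[X]) * X)
  have h1 : ((X ^ (d ^ 2 - 1) - 1) * X : K[X]) = (X ^ d - X - 1) ^ d + (X ^ d - X - 1) := by
    obtain ⟨m, rfl⟩ := hd2
    have h2 : (2 : K[X]) = 0 := CharTwo.two_eq_zero
    rw [sub_pow_char_pow, sub_pow_char_pow, one_pow, sub_mul, ← pow_succ,
      Nat.sub_add_cancel (Nat.one_le_pow _ _ (by omega)), pow_two (2 ^ m), pow_mul (X : K[X])]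
    linear_combination h2
  rw [h1]
  exact dvd_add (dvd_pow_self _ (by omega)) dvd_rfl


/-- (Theorem `zullopaultheo`.) Let `q` be even, `d ≥ 4` a power of `2`,
`n = d² - 1`, `gcd(s,n)=1`, `σ : x ↦ x^{q^s}`. If `N_{q^n/q}(a) = 1` and
`b = (∏_{i=1}^{d-1} σ^{id}(a))⁻¹`, then the `F_q`-dimension of the kernel of the
`σ`-linearized polynomial `−x^{σ^d} + b·x^σ + a·x` equals `d`. -/
theorem stmt_5 (p q : ℕ) (hp : p.Prime) (hq : ∃ m : ℕ, 0 < m ∧ q = p ^ m)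
    (hqeven : Even q)
    (K L : Type*) [Field K] [Field L] [Fintype K] [Fintype L] [Algebra K L]
    (hcardK : Fintype.card K = q)
    (d : ℕ) (hd : 4 ≤ d) (hd2 : ∃ m : ℕ, d = 2 ^ m)
    (n : ℕ) (hnval : n = d ^ 2 - 1) (hcardL : Fintype.card L = q ^ n)
    (s : ℕ) (hs : 0 < s) (hsn : Nat.gcd s n = 1)
    (σ : L ≃ₐ[K] L) (hσ : ∀ x : L, σ x = x ^ q ^ s)
    (a b : L) (ha : a ^ ((q ^ n - 1) / (q - 1)) = 1)
    (hb : b = (∏ i ∈ Finset.Icc 1 (d - 1), (σ ^ (i * d)) a)⁻¹) :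
    Module.finrank K
      (LinearMap.ker
        (- (σ ^ d : L ≃ₐ[K] L).toLinearMap
          + LinearMap.mulLeft K b ∘ₗ σ.toLinearMap + LinearMap.mulLeft K a)) = d := by

  have hn0 : 0 < n := by
    have : 4 ^ 2 ≤ d ^ 2 := Nat.pow_le_pow_left hd 2
    omega
  have hdn : d * d = n + 1 := by
    have : 4 ^ 2 ≤ d ^ 2 := Nat.pow_le_pow_left hd 2
    rw [← pow_two]; omega
  have hq2 : 2 ≤ q := hcardK ▸ Fintype.one_lt_card
  have hp2 : p = 2 := by
    obtain ⟨m, hm, rfl⟩ := hq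
    exact (Nat.prime_dvd_prime_iff_eq Nat.prime_two hp).1
      (Nat.prime_two.dvd_of_dvd_pow hqeven.two_dvd) |>.symm
  haveI : CharP K 2 := by
    obtain ⟨m, hm, hqm⟩ := hq
    have hf : Fact (Nat.Prime 2) := ⟨Nat.prime_two⟩
    exact charP_of_card_eq_prime_pow (f := m) (by rw [hcardK, hqm, hp2])
  have hfr : Module.finrank K L = n := by
    have := Module.card_eq_pow_finrank (K := K) (V := L)
    rw [hcardL, hcardK] at this
    exact (Nat.pow_right_injective hq2 this).symm
  have hord : orderOf σ = Module.finrank K L :=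
    aux_orderOf s (by rw [hfr]; exact hsn) σ (by rw [hcardK]; exact hσ)
  have hσn : σ ^ n = 1 := by rw [← hfr, ← hord, pow_orderOf_eq_one]
  have hσk : ∀ (k : ℕ) (x : L), (σ ^ k) x = x ^ q ^ (s * k) := by
    intro k
    induction k with
    | zero => intro x; simp
    | succ k ih =>
      intro x
      rw [pow_succ, AlgEquiv.mul_apply, ih, hσ, ← pow_mul, ← pow_add]
      congr 2
      ring
  have hdcop : Nat.gcd (s * d) n = 1 := by
    refine Nat.Coprime.mul_left hsn ?_
    have h1 : Nat.Coprime (d * d) n := by rw [hdn]; simp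
    exact Nat.Coprime.coprime_mul_right h1
  obtain ⟨c, hc0, hc⟩ := aux_h90 q n (s * d) hq2 hcardL hn0 hdcop a ha
  rw [← hσk] at hc
  have hprod : ∀ k : ℕ, (∏ i ∈ Finset.Icc 1 k, (σ ^ (i * d)) a) * (σ ^ d) c
      = (σ ^ ((k + 1) * d)) c := by
    intro k
    induction k with
    | zero => simp
    | succ k ih =>
      rw [Finset.prod_Icc_succ_top (by omega), mul_right_comm, ih, add_mul (k + 1) 1 d, one_mul,
        pow_add σ ((k + 1) * d) d, AlgEquiv.mul_apply, hc, map_mul, mul_comm]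
  have hbc : b * σ c = (σ ^ d) c := by
    have h1 := hprod (d - 1)
    rw [Nat.sub_add_cancel (by omega), hdn, pow_succ, hσn, one_mul] at h1
    rw [hb, ← h1, inv_mul_cancel_left₀]
    intro h0
    rw [h0, zero_mul] at h1
    exact hc0 (by simpa using h1.symm)
  have hτc : (σ ^ d) c ≠ 0 := (map_ne_zero (σ ^ d)).2 hc0
  set T : L →ₗ[K] L := - (σ ^ d : L ≃ₐ[K] L).toLinearMap
          + LinearMap.mulLeft K b ∘ₗ σ.toLinearMap + LinearMap.mulLeft K a with hT
  let h : Polynomial K := Polynomial.X ^ d - Polynomial.X - 1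
  let e : L ≃ₗ[K] L := LinearEquiv.ofBijective (LinearMap.mulLeft K c)
    ⟨fun x y hxy => mul_left_cancel₀ hc0 hxy, fun y => ⟨c⁻¹ * y, mul_inv_cancel_left₀ hc0 y⟩⟩
  have he : ∀ x, e x = c * x := fun x => rfl
  have hSp : ∀ (i : ℕ) (x : L), ((σ.toLinearMap : Module.End K L) ^ i) x = (σ ^ i) x := by
    intro i
    induction i with
    | zero => intro x; rfl
    | succ k ih => intro x; rw [pow_succ, pow_succ, Module.End.mul_apply, AlgEquiv.mul_apply, ih]; rfl
  have hTe : ∀ y, T (e y) =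
      - ((σ ^ d) c * Polynomial.aeval (σ.toLinearMap : Module.End K L) h y) := by
    intro y
    have h1 : Polynomial.aeval (σ.toLinearMap : Module.End K L) h y = (σ ^ d) y - σ y - y := by
      simp [h, hSp]
    have h2 : T (e y) = - (σ ^ d) (c * y) + b * σ (c * y) + a * (c * y) := rfl
    rw [h1, h2, map_mul, map_mul]
    linear_combination σ y * hbc - y * hc
  have hker : LinearMap.ker T = (LinearMap.ker
      (Polynomial.aeval (σ.toLinearMap : Module.End K L) h)).map (e : L →ₗ[K] L) := by
    ext x
    obtain ⟨y, rfl⟩ := e.surjective x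
    rw [LinearMap.mem_ker, hTe, Submodule.mem_map]
    constructor
    · intro hy
      refine ⟨y, ?_, rfl⟩
      exact (mul_eq_zero.1 (neg_eq_zero.1 hy)).resolve_left hτc
    · rintro ⟨z, hz, hzy⟩
      obtain rfl : z = y := e.injective hzy
      rw [LinearMap.mem_ker.1 hz]; simp
  rw [hker, LinearEquiv.finrank_map_eq, aux_ker_eq σ hord h (by
    rw [hfr, hnval]; exact aux_dvd d hd hd2)]
  simp only [h]
  have : (Polynomial.X ^ d - Polynomial.X - 1 : Polynomial K)
      = Polynomial.X ^ d - (Polynomial.X + 1) := by ring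
  rw [this, Polynomial.natDegree_sub_eq_left_of_natDegree_lt]
  · simp
  · have : (Polynomial.X + 1 : Polynomial K).natDegree = 1 := by
      simpa using Polynomial.natDegree_X_add_C (1 : K)
    rw [this]; simp; omega
end

section
/- For every i ∈ {0,1,…,d−3} and every integer j with i·d+2 ≤ j ≤ (i+1)d−(i+1), one has M_{1,j} = 0. -/
/-- The `σ`-companion matrix `C_L` of `L(x) = −x^{σ^d} + b·x^σ + a·x`: its `(i+1,i)`-entries
(1-based) equal `1` for `i = 1, …, d-1`, its last column is `(a, b, 0, …, 0)ᵀ`, and all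
remaining entries are `0`. (Indices here are 0-based.) -/
def companionCL (L : Type*) [Field L] (d : ℕ) (a b : L) : Matrix (Fin d) (Fin d) L :=
  fun i j =>
    if (i : ℕ) = (j : ℕ) + 1 then 1
    else if (j : ℕ) = d - 1 ∧ (i : ℕ) = 0 then a
    else if (j : ℕ) = d - 1 ∧ (i : ℕ) = 1 then b
    else 0

/-- `A_k = C_L · C_L^σ · ⋯ · C_L^{σ^{k-1}}`, where `C^{σ^i}` applies `σ^i` entrywise. -/
noncomputable def Amat {K L : Type*} [Field K] [Field L] [Algebra K L]
    (σ : L ≃ₐ[K] L) (d : ℕ) (a b : L) (k : ℕ) : Matrix (Fin d) (Fin d) L :=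
  ((List.range k).map (fun i => (companionCL L d a b).map ⇑(σ ^ i : L ≃ₐ[K] L))).prod

theorem Amat_first_row_zero {K L : Type*} [Field K] [Field L] [Algebra K L]
    (σ : L ≃ₐ[K] L) (d : ℕ) (hd : 3 ≤ d) (a b : L) (k : ℕ) :
    ∀ (z j : Fin d) (t : ℕ), (z : ℕ) = 0 → t * d < k + j → k + j + (t + 1) ≤ (t + 1) * d →
      Amat σ d a b k z j = 0 := by
  induction k with
  | zero =>
    intro z j t hz h1 h2
    have hne : z ≠ j := by
      intro h
      rw [← h, hz] at h1
      omega
    simp [Amat, Matrix.one_apply_ne hne]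
  | succ k ih =>
    intro z j t hz h1 h2
    have hstep : Amat σ d a b (k + 1) =
        Amat σ d a b k * (companionCL L d a b).map ⇑(σ ^ k : L ≃ₐ[K] L) := by
      simp [Amat, List.range_succ]
    rw [hstep, Matrix.mul_apply]
    apply Finset.sum_eq_zero
    intro i _
    rw [Matrix.map_apply]
    by_cases hc : (i : ℕ) = (j : ℕ) + 1
    · rw [ih z i t hz (by omega) (by omega), zero_mul]
    by_cases hj : (j : ℕ) = d - 1 ∧ (i : ℕ) ≤ 1
    · obtain ⟨hj, hi⟩ := hj
      cases t with
      | zero => exfalso; omega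
      | succ t =>
        have e1 : (t + 1) * d = t * d + d := by ring
        have e2 : (t + 1 + 1) * d = t * d + d + d := by ring
        rw [ih z i t hz (by omega) (by omega), zero_mul]
    · have : companionCL L d a b i j = 0 := by
        unfold companionCL
        rw [if_neg hc, if_neg (by omega), if_neg (by omega)]
      rw [this, map_zero, mul_zero]

/-- (Proposition `propM1`.) For every `i ∈ {0, …, d-3}` and every `j` with
`i·d + 2 ≤ j ≤ (i+1)d − (i+1)`, one has `M 1 j = 0`. -/
theorem stmt_7
    (p q : ℕ) (hp : p.Prime) (hq : ∃ m : ℕ, 0 < m ∧ q = p ^ m)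
    (K L : Type*) [Field K] [Field L] [Fintype K] [Fintype L] [Algebra K L]
    (hcardK : Fintype.card K = q)
    (n : ℕ) (hn : 0 < n) (hcardL : Fintype.card L = q ^ n)
    (s : ℕ) (hs : 0 < s) (hsn : Nat.gcd s n = 1)
    (σ : L ≃ₐ[K] L) (hσ : ∀ x : L, σ x = x ^ q ^ s)
    (d : ℕ) (hd : 3 ≤ d) (a b : L)
    (M : ℕ → ℤ → L)
    (hMpos : ∀ (l : ℕ) (hl1 : 1 ≤ l) (hl2 : l ≤ d) (k : ℕ), 1 ≤ k →
      M l k = Amat σ d a b k ⟨l - 1, by omega⟩ ⟨d - 1, by omega⟩)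
    (hMdiag : ∀ (l : ℕ), 1 ≤ l → l ≤ d → M l ((l : ℤ) - d) = 1)
    (hMzero : ∀ (l : ℕ), 1 ≤ l → l ≤ d → ∀ k : ℤ, k ≤ 0 → k ≠ (l : ℤ) - d → M l k = 0)
    :
    ∀ i : ℕ, i ≤ d - 3 → ∀ j : ℕ, i * d + 2 ≤ j → j ≤ (i + 1) * d - (i + 1) →
      M 1 (j : ℤ) = 0 := by
  intro i hi j h1 h2
  rw [hMpos 1 le_rfl (by omega) j (by omega)]
  have e1 : (i + 1) * d = i * d + d := by ring
  have e2 : (i + 1 + 1) * d = i * d + d + d := by ring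
  refine Amat_first_row_zero σ d hd a b j _ _ (i + 1) rfl ?_ ?_
  · simp only
    omega
  · simp only
    omega
end

section
/- Let d ≥ 3 and n ≥ d+1, and let a, b ∈ F_{q^n}. Then the F_q-dimension of the kernel of L(x) = −x^{σ^d} + b·x^σ + a·x equals d if and only if M_{1,n−d+1} = 1 and M_{l,n−d+1} = 0 for every l ∈ {2,…,d}. -/
open Finset in
theorem skew_ker {K L : Type*} [Field K] [Field L] [Algebra K L] [FiniteDimensional K L]
    (σ : L ≃ₐ[K] L) (hfix : ∀ x : L, σ x = x → ∃ y : K, algebraMap K L y = x) :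
    ∀ (k : ℕ) (c : ℕ → L) (V : Submodule K L), k ≤ Module.finrank K V →
      (∀ x ∈ V, ∑ i ∈ range k, c i * (σ ^ i) x = 0) → ∀ i < k, c i = 0 := by
  intro k
  induction k with
  | zero => intro c V _ _ i hi; omega
  | succ k ih =>
    intro c V hV hc
    have hne : V ≠ ⊥ := by
      rintro rfl
      simp at hV
    obtain ⟨u, huV, hu⟩ := Submodule.exists_mem_ne_zero_of_ne_bot hne
    -- the map x ↦ σ (u⁻¹ x) - u⁻¹ x
    let T : L →ₗ[K] L := (σ.toLinearMap - LinearMap.id) ∘ₗ LinearMap.mulLeft K u⁻¹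
    have hT : ∀ x, T x = σ (u⁻¹ * x) - u⁻¹ * x := fun x => by simp [T]
    let g : ℕ → L := fun j => ∑ i ∈ Ico (j+1) (k+1), c i * (σ ^ i) u
    have hs : ∑ i ∈ range (k+1), c i * (σ ^ i) u = 0 := hc u huV
    have hg : ∀ j < k, g j = 0 := by
      apply ih g (V.map T)
      · have h1 := LinearMap.finrank_range_add_finrank_ker (T.domRestrict V)
        have h2 : LinearMap.range (T.domRestrict V) = V.map T := by
          rw [LinearMap.range_domRestrict]
        rw [h2] at h1
        have h3 : Module.finrank K (LinearMap.ker (T.domRestrict V)) ≤ 1 := by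
          apply finrank_le_one (⟨⟨u, huV⟩, ?_⟩ : LinearMap.ker (T.domRestrict V))
          · rintro ⟨⟨w, hw⟩, hw'⟩
            have : T w = 0 := hw'
            rw [hT, sub_eq_zero] at this
            obtain ⟨y, hy⟩ := hfix _ this
            refine ⟨y, ?_⟩
            apply Subtype.ext
            apply Subtype.ext
            change y • u = w
            rw [Algebra.smul_def, hy]
            field_simp
          · change T u = 0
            rw [hT]; simp [hu]
        omega
      · rintro _ ⟨x, hx, rfl⟩
        have hcx := hc x hx
        set y := u⁻¹ * x with hy
        have hxy : x = u * y := by rw [hy]; field_simp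
        rw [hT, ← hy]
        rw [hxy] at hcx
        have e1 : ∀ i ∈ range (k+1), c i * (σ ^ i) (u * y) = c i * (σ ^ i) u * y +
            ∑ j ∈ range i, c i * (σ ^ i) u * (σ ^ j) (σ y - y) := by
          intro i _
          have : ∑ j ∈ range i, (σ ^ j) (σ y - y) = (σ ^ i) y - y := by
            have h := Finset.sum_range_sub (fun j => (σ ^ j) y) i
            simp only [pow_zero, AlgEquiv.one_apply] at h
            rw [← h]
            refine sum_congr rfl fun j _ => ?_
            rw [map_sub, pow_succ, AlgEquiv.mul_apply]
          rw [← mul_sum, this, map_mul]; ring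
        rw [sum_congr rfl e1, sum_add_distrib, ← sum_mul, hs, zero_mul, zero_add] at hcx
        rw [← hcx]
        simp only [g, sum_mul]
        apply Finset.sum_comm'
        intro a b
        simp only [mem_range, mem_Ico]
        omega
    have hpos : ∀ i, 0 < i → i < k + 1 → c i = 0 := by
      intro i hi hik
      obtain ⟨j, rfl⟩ : ∃ j, i = j + 1 := ⟨i - 1, by omega⟩
      have h1 := hg j (by omega)
      have h2 : g (j+1) = 0 := by
        by_cases h : j + 1 < k
        · exact hg _ h
        · simp only [g]; rw [Ico_eq_empty (by omega), sum_empty]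
      simp only [g] at h1 h2
      rw [Finset.sum_eq_sum_Ico_succ_bot (by omega), h2, add_zero] at h1
      exact (mul_eq_zero.1 h1).resolve_right ((map_ne_zero _).2 hu)
    intro i hi
    rcases Nat.eq_zero_or_pos i with rfl | h
    · rw [sum_range_succ', sum_eq_zero] at hs
      · simpa [hu] using hs
      · intro j hj
        rw [hpos (j+1) (by omega) (by simpa using hj), zero_mul]
    · exact hpos i h hi

theorem Amat_succ {K L : Type*} [Field K] [Field L] [Algebra K L]
    (σ : L ≃ₐ[K] L) (d : ℕ) (a b : L) (k : ℕ) :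
    Amat σ d a b (k+1) = companionCL L d a b * (Amat σ d a b k).map ⇑σ := by
  unfold Amat
  rw [List.range_succ_eq_map, List.map_cons, List.prod_cons]
  congr 1
  · have := map_list_prod (σ.toRingEquiv.toRingHom.mapMatrix (m := Fin d))
      ((List.range k).map (fun i => (companionCL L d a b).map ⇑(σ ^ i : L ≃ₐ[K] L)))
    have e : ∀ A : Matrix (Fin d) (Fin d) L, σ.toRingEquiv.toRingHom.mapMatrix A = A.map ⇑σ :=
      fun A => rfl
    rw [e] at this
    rw [this, List.map_map, List.map_map]
    congr 1
    apply List.map_congr_left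
    intro i _
    ext r t
    simp
    rw [← Function.iterate_succ_apply, Function.iterate_succ_apply']

theorem col_sum {K L : Type*} [Field K] [Field L] [Algebra K L]
    (σ : L ≃ₐ[K] L) (d : ℕ) (hd : 3 ≤ d) (a b : L) (x : L) (j : Fin d) :
    ∑ i : Fin d, companionCL L d a b i j * (σ ^ (i:ℕ)) x =
      (σ ^ ((j:ℕ)+1)) x +
        (if (j:ℕ) = d - 1 then -(σ ^ d) x + b * σ x + a * x else 0) := by
  by_cases hj : (j:ℕ) = d - 1
  · have h1 : ∀ i : Fin d, companionCL L d a b i j * (σ ^ (i:ℕ)) x =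
        (if i = ⟨0, by omega⟩ then a * x else 0) + (if i = ⟨1, by omega⟩ then b * σ x else 0) := by
      intro i
      have := i.2
      unfold companionCL
      rw [if_neg (by omega)]
      rcases i with ⟨_ | _ | i, hi⟩ <;> simp [hj]
    rw [Finset.sum_congr rfl fun i _ => h1 i, Finset.sum_add_distrib]
    simp only [Finset.sum_ite_eq', Finset.mem_univ, if_true, if_pos hj]
    rw [show (j:ℕ)+1 = d by omega]; ring
  · have := j.2
    rw [Finset.sum_eq_single ⟨(j:ℕ)+1, by omega⟩]
    · simp [companionCL, hj]
    · intro i _ hi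
      have : (i:ℕ) ≠ j + 1 := fun h => hi (Fin.ext h)
      simp [companionCL, hj, this]
    · simp

theorem rem_exists {K L : Type*} [Field K] [Field L] [Algebra K L]
    (σ : L ≃ₐ[K] L) (d : ℕ) (hd : 3 ≤ d) (a b : L) (k : ℕ) :
    ∃ c : ℕ → L, (1 ≤ k → c (k-1) = -1) ∧ ∀ x : L, (σ ^ (d - 1 + k)) x =
      ∑ i : Fin d, Amat σ d a b k i ⟨d-1, by omega⟩ * (σ ^ (i:ℕ)) x +
      ∑ i ∈ Finset.range k, c i * (σ ^ i) (-(σ ^ d) x + b * σ x + a * x) := by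
  induction k with
  | zero =>
    refine ⟨0, by simp, fun x => ?_⟩
    simp [Amat, Matrix.one_apply]
  | succ k ih =>
    obtain ⟨c, hc, h⟩ := ih
    let top : L := Amat σ d a b k ⟨d-1, by omega⟩ ⟨d-1, by omega⟩
    refine ⟨fun i => if i = 0 then -σ top else σ (c (i-1)), ?_, fun x => ?_⟩
    · intro _
      by_cases hk : k = 0
      · subst hk; simp [top, Amat]
      · simp only [Nat.add_sub_cancel, if_neg hk]
        rw [hc (by omega)]; simp
    · set F := -(σ ^ d) x + b * σ x + a * x with hF
      have hs : ∀ (m : ℕ) (y : L), σ ((σ ^ m) y) = (σ ^ (m+1)) y := fun m y => by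
        rw [pow_succ', AlgEquiv.mul_apply]
      rw [← add_assoc, ← hs, h x, map_add, map_sum, map_sum, Finset.sum_range_succ']
      simp only [map_mul, hs, ← hF]
      have e : ∑ i : Fin d, Amat σ d a b (k+1) i ⟨d-1, by omega⟩ * (σ ^ (i:ℕ)) x =
          ∑ j : Fin d, σ (Amat σ d a b k j ⟨d-1, by omega⟩) * (σ ^ ((j:ℕ)+1)) x + σ top * F := by
        rw [Amat_succ]
        simp only [Matrix.mul_apply, Matrix.map_apply, Finset.sum_mul]
        rw [Finset.sum_comm]
        have : ∀ j : Fin d, ∑ i : Fin d, companionCL L d a b i j *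
            σ (Amat σ d a b k j ⟨d-1, by omega⟩) * (σ ^ (i:ℕ)) x =
            σ (Amat σ d a b k j ⟨d-1, by omega⟩) * (σ ^ ((j:ℕ)+1)) x +
            if j = ⟨d-1, by omega⟩ then σ top * F else 0 := by
          intro j
          have h1 := col_sum σ d hd a b x j
          calc _ = σ (Amat σ d a b k j ⟨d-1, by omega⟩) *
                ∑ i : Fin d, companionCL L d a b i j * (σ ^ (i:ℕ)) x := by
                rw [Finset.mul_sum]; refine Finset.sum_congr rfl fun i _ => by ring
            _ = _ := by
                rw [h1, mul_add, ← hF]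
                by_cases hj : (j:ℕ) = d - 1
                · have : j = ⟨d-1, by omega⟩ := Fin.ext hj
                  have ht : Amat σ d a b k j ⟨d-1, by omega⟩ = top :=
                    congrArg (fun j => Amat σ d a b k j ⟨d-1, by omega⟩) this
                  rw [if_pos hj, if_pos this, ht]
                · have : j ≠ ⟨d-1, by omega⟩ := fun h => hj (by rw [h])
                  simp [hj, this]
        rw [Finset.sum_congr rfl fun j _ => this j, Finset.sum_add_distrib]
        simp
      rw [e]
      simp
      ring

theorem core {K L : Type*} [Field K] [Field L] [Algebra K L] [FiniteDimensional K L]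
    (σ : L ≃ₐ[K] L) (hfix : ∀ x : L, σ x = x → ∃ y : K, algebraMap K L y = x)
    (n : ℕ) (hn : Module.finrank K L = n) (hσn : σ ^ n = 1)
    (d : ℕ) (hd : 3 ≤ d) (a b : L) (hnd : d + 1 ≤ n) :
    Module.finrank K
      (LinearMap.ker
        (- (σ ^ d : L ≃ₐ[K] L).toLinearMap
          + LinearMap.mulLeft K b ∘ₗ σ.toLinearMap + LinearMap.mulLeft K a)) = d
      ↔ ∀ i : Fin d, Amat σ d a b (n-d+1) i ⟨d-1, by omega⟩ = if (i:ℕ) = 0 then 1 else 0 := by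
  set F := (- (σ ^ d : L ≃ₐ[K] L).toLinearMap
          + LinearMap.mulLeft K b ∘ₗ σ.toLinearMap + LinearMap.mulLeft K a) with hF
  have hFx : ∀ x, F x = -(σ ^ d) x + b * σ x + a * x := fun x => by simp [hF]
  obtain ⟨c, hc, h⟩ := rem_exists σ d hd a b (n-d+1)
  rw [show d - 1 + (n-d+1) = n by omega, hσn] at h
  simp only [← hFx, AlgEquiv.one_apply] at h
  constructor
  · intro hk i
    let r : ℕ → L := fun i => if hi : i < d then
      Amat σ d a b (n-d+1) ⟨i, hi⟩ ⟨d-1, by omega⟩ - (if i = 0 then 1 else 0) else 0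
    have := skew_ker σ hfix d r (LinearMap.ker F) hk.ge (fun x hx => ?_) i i.2
    · simp only [r, i.2, dif_pos] at this
      exact sub_eq_zero.1 this
    · have hx' : F x = 0 := hx
      have h1 := h x
      simp only [hx', map_zero, mul_zero, Finset.sum_const_zero, add_zero] at h1
      rw [Finset.sum_range]
      simp only [r, Fin.is_lt, dif_pos, Fin.eta, sub_mul]
      rw [Finset.sum_sub_distrib, ← h1, Finset.sum_eq_single ⟨0, by omega⟩]
      · simp
      · intro i _ hi
        have : (i:ℕ) ≠ 0 := fun h => hi (Fin.ext h)
        simp [this]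
      · simp
  · intro hA
    have hle : Module.finrank K (LinearMap.ker F) < d + 1 := by
      by_contra hcon
      let f : ℕ → L := fun i => if i = d then -1 else if i = 1 then b else if i = 0 then a else 0
      have := skew_ker σ hfix (d+1) f (LinearMap.ker F) (by omega) (fun x hx => ?_) d (by omega)
      · simp [f] at this
      · have hx' : F x = 0 := hx
        obtain ⟨e, rfl⟩ : ∃ e, d = e + 2 := ⟨d - 2, by omega⟩
        rw [Finset.sum_range_succ, Finset.sum_range_succ', Finset.sum_range_succ',
          Finset.sum_eq_zero]
        · rw [hFx] at hx'
          have : e ≠ 0 := by omega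
          simp [f] at hx' ⊢
          linear_combination hx'
        · intro i hi
          have : i ≠ e := by simp at hi; omega
          simp [f, this]
    by_contra hne
    have hr := LinearMap.finrank_range_add_finrank_ker F
    have := skew_ker σ hfix (n-d+1) c (LinearMap.range F) (by omega) (fun y hy => ?_) (n-d) (by omega)
    · have h2 := hc (by omega)
      rw [Nat.add_sub_cancel, this] at h2
      simp at h2
    · obtain ⟨x, rfl⟩ := hy
      have h1 := h x
      rw [Finset.sum_eq_single (⟨0, by omega⟩ : Fin d)] at h1
      · rw [hA] at h1
        simpa using h1
      · intro i _ hi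
        have : (i:ℕ) ≠ 0 := fun h => hi (Fin.ext h)
        rw [hA]; simp [this]
      · simp

/-- (Corollary `systemsplit`.) Let `d ≥ 3`, `n ≥ d+1`. The `F_q`-dimension
of the kernel of `L(x) = −x^{σ^d} + b·x^σ + a·x` equals `d` if and only if
`M 1 (n-d+1) = 1` and `M l (n-d+1) = 0` for every `l ∈ {2, …, d}`. -/
theorem stmt_9
    (p q : ℕ) (hp : p.Prime) (hq : ∃ m : ℕ, 0 < m ∧ q = p ^ m)
    (K L : Type*) [Field K] [Field L] [Fintype K] [Fintype L] [Algebra K L]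
    (hcardK : Fintype.card K = q)
    (n : ℕ) (hn : 0 < n) (hcardL : Fintype.card L = q ^ n)
    (s : ℕ) (hs : 0 < s) (hsn : Nat.gcd s n = 1)
    (σ : L ≃ₐ[K] L) (hσ : ∀ x : L, σ x = x ^ q ^ s)
    (d : ℕ) (hd : 3 ≤ d) (a b : L)
    (M : ℕ → ℤ → L)
    (hMpos : ∀ (l : ℕ) (hl1 : 1 ≤ l) (hl2 : l ≤ d) (k : ℕ), 1 ≤ k →
      M l k = Amat σ d a b k ⟨l - 1, by omega⟩ ⟨d - 1, by omega⟩)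
    (hMdiag : ∀ (l : ℕ), 1 ≤ l → l ≤ d → M l ((l : ℤ) - d) = 1)
    (hMzero : ∀ (l : ℕ), 1 ≤ l → l ≤ d → ∀ k : ℤ, k ≤ 0 → k ≠ (l : ℤ) - d → M l k = 0)
    (hnd : d + 1 ≤ n) :
    Module.finrank K
      (LinearMap.ker
        (- (σ ^ d : L ≃ₐ[K] L).toLinearMap
          + LinearMap.mulLeft K b ∘ₗ σ.toLinearMap + LinearMap.mulLeft K a)) = d
      ↔ (M 1 ((n : ℤ) - d + 1) = 1
          ∧ ∀ l : ℕ, 2 ≤ l → l ≤ d → M l ((n : ℤ) - d + 1) = 0) := by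
  subst hcardK
  have hKL : Fintype.card K = Nat.card K := (Nat.card_eq_fintype_card).symm
  have hq1 : 1 < Fintype.card K := Fintype.one_lt_card
  have hfr : Module.finrank K L = n := by
    have := Module.card_eq_pow_finrank (K := K) (V := L)
    rw [hcardL] at this
    exact (Nat.pow_right_injective hq1 this).symm
  have hpw : ∀ (m : ℕ) (x : L), (σ ^ m) x = x ^ (Fintype.card K ^ (s * m)) := by
    intro m x
    induction m with
    | zero => simp
    | succ m ih =>
      rw [pow_succ', AlgEquiv.mul_apply, ih, hσ, ← pow_mul, ← pow_add]
      congr 2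
  have hcL : ∀ x : L, x ^ (Fintype.card K ^ n) = x := fun x => by
    rw [← hcardL]; exact FiniteField.pow_card x
  have hper : ∀ (m : ℕ) (x : L), (fun y : L => y ^ Fintype.card K)^[m] x = x ^ (Fintype.card K ^ m) := by
    intro m x
    rw [pow_iterate]
  have hσn : σ ^ n = 1 := by
    ext x
    rw [hpw, AlgEquiv.one_apply, ← hper]
    have h : Function.IsPeriodicPt (fun y : L => y ^ Fintype.card K) n x := by
      change _ = _
      rw [hper]; exact hcL x
    exact h.const_mul s
  have hfix : ∀ x : L, σ x = x → ∃ y : K, algebraMap K L y = x := by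
    intro x hx
    have h1 : Function.IsPeriodicPt (fun y : L => y ^ Fintype.card K) n x := by
      change _ = _
      rw [hper]; exact hcL x
    have h2 : Function.IsPeriodicPt (fun y : L => y ^ Fintype.card K) s x := by
      change _ = _
      rw [hper, ← hσ]; exact hx
    have h3 := h2.gcd h1
    rw [hsn] at h3
    have h4 : x ^ Fintype.card K = x := by simpa using h3.eq
    classical
    have hne := FiniteField.X_pow_card_sub_X_ne_zero L hq1
    have hsub : (Finset.univ.image (algebraMap K L)) ⊆
        (Polynomial.X ^ Fintype.card K - Polynomial.X : Polynomial L).roots.toFinset := by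
      intro z hz
      obtain ⟨y, _, rfl⟩ := Finset.mem_image.1 hz
      rw [Multiset.mem_toFinset, Polynomial.mem_roots hne]
      simp [← map_pow, FiniteField.pow_card]
    have heq := Finset.eq_of_subset_of_card_le hsub (by
      rw [Finset.card_image_of_injective _ (algebraMap K L).injective, Finset.card_univ]
      refine (Multiset.toFinset_card_le _).trans ((Polynomial.card_roots' _).trans ?_)
      rw [FiniteField.X_pow_card_sub_X_natDegree_eq L hq1])
    have hxm : x ∈ Finset.univ.image (algebraMap K L) := by
      rw [heq, Multiset.mem_toFinset, Polynomial.mem_roots hne]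
      simp [h4]
    obtain ⟨y, _, hy⟩ := Finset.mem_image.1 hxm
    exact ⟨y, hy⟩
  rw [core σ hfix n hfr hσn d hd a b hnd]
  have hcast : (n : ℤ) - d + 1 = ((n - d + 1 : ℕ) : ℤ) := by omega
  rw [hcast]
  constructor
  · intro h
    refine ⟨?_, fun l hl hld => ?_⟩
    · rw [hMpos 1 le_rfl (by omega) _ (by omega), h]; simp
    · rw [hMpos l (by omega) hld _ (by omega), h]
      rw [if_neg]
      simp only
      omega
  · rintro ⟨h1, h2⟩ ⟨i, hi⟩
    by_cases h0 : i = 0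
    · subst h0
      rw [hMpos 1 le_rfl (by omega) _ (by omega)] at h1
      simpa using h1
    · have := h2 (i+1) (by omega) (by omega)
      rw [hMpos (i+1) (by omega) (by omega) _ (by omega)] at this
      simpa [h0] using this
end

section
/- Suppose σ^d(a)·b = σ(a)·σ^d(b). Fix an integer k ≥ d+1 and define elements z_{j,i} ∈ F_{q^n} for 0 ≤ i ≤ j by the recursion: z_{0,0} = 1; z_{j,0} = z_{j−1,0} · σ^{k−(j−1)d−1}(a); z_{j,i} = z_{j−1,i} · σ^{k−(j−1)d+i−1}(a) for 0 < i < j; and z_{j,j} = z_{j−1,j−1} · σ^{k−(j−1)d+j−2}(b), where powers of σ are taken modulo n. Then for every j with 0 ≤ j ≤ ⌊(k−1)/d⌋ + 1 and every l with 1 ≤ l ≤ d, one has M_{l,k} = Σ_{i=0}^{j} binom(j,i) · z_{j,i} · M_{l,k−jd+i}; moreover, for 0 < i < j one has z_{j−1,i} · σ^{k−(j−1)d+i−1}(a) = z_{j−1,i−1} · σ^{k−(j−1)d+i−2}(b). -/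
theorem Amat_succ_aux {K L : Type*} [Field K] [Field L] [Algebra K L]
    (σ : L ≃ₐ[K] L) (d : ℕ) (a b : L) (k : ℕ) :
    Amat σ d a b (k + 1) =
      Amat σ d a b k * (companionCL L d a b).map ⇑(σ ^ k : L ≃ₐ[K] L) := by
  simp [Amat, List.range_succ]

theorem Amat_succ_lt {K L : Type*} [Field K] [Field L] [Algebra K L]
    (σ : L ≃ₐ[K] L) (d : ℕ) (a b : L) (k : ℕ) (r : Fin d) (c : ℕ) (hc : c + 1 < d) :
    Amat σ d a b (k + 1) r ⟨c, by omega⟩ = Amat σ d a b k r ⟨c + 1, hc⟩ := by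
  rw [Amat_succ_aux, Matrix.mul_apply, Finset.sum_eq_single ⟨c + 1, hc⟩]
  · simp [companionCL]
  · intro x _ hx
    have h1 : (x : ℕ) ≠ c + 1 := fun h => hx (Fin.ext h)
    have h2 : c ≠ d - 1 := by omega
    simp [companionCL, h1, h2]
  · simp

theorem Amat_succ_last {K L : Type*} [Field K] [Field L] [Algebra K L]
    (σ : L ≃ₐ[K] L) (d : ℕ) (hd : 3 ≤ d) (a b : L) (k : ℕ) (r : Fin d) :
    Amat σ d a b (k + 1) r ⟨d - 1, by omega⟩ =
      Amat σ d a b k r ⟨0, by omega⟩ * (σ ^ k) a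
      + Amat σ d a b k r ⟨1, by omega⟩ * (σ ^ k) b := by
  rw [Amat_succ_aux, Matrix.mul_apply,
    ← Finset.sum_subset (Finset.subset_univ {⟨0, by omega⟩, ⟨1, by omega⟩})]
  · rw [Finset.sum_pair (by simp)]
    have h1 : d - 1 ≠ 0 := by omega
    simp [companionCL, h1]
  · intro x _ hx
    simp only [Finset.mem_insert, Finset.mem_singleton, not_or, Fin.ext_iff] at hx
    have h1 : (x : ℕ) ≠ d - 1 + 1 := by omega
    simp [companionCL, h1, hx.1, hx.2]

/-- (Lemma `trianglepascal`.) Suppose `σ^d(a)·b = σ(a)·σ^d(b)`. Fix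
`k ≥ d+1` and let `z j i` be given by the stated recursion (integer powers of `σ`, i.e.
"modulo n"). Then for every `j ≤ ⌊(k-1)/d⌋ + 1` and `1 ≤ l ≤ d`,
`M l k = Σ_{i=0}^j C(j,i)·z j i·M l (k - jd + i)`; moreover, for `0 < i < j`,
`z (j-1) i · σ^{k-(j-1)d+i-1}(a) = z (j-1) (i-1) · σ^{k-(j-1)d+i-2}(b)`. -/
theorem stmt_10
    (p q : ℕ) (hp : p.Prime) (hq : ∃ m : ℕ, 0 < m ∧ q = p ^ m)
    (K L : Type*) [Field K] [Field L] [Fintype K] [Fintype L] [Algebra K L]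
    (hcardK : Fintype.card K = q)
    (n : ℕ) (hn : 0 < n) (hcardL : Fintype.card L = q ^ n)
    (s : ℕ) (hs : 0 < s) (hsn : Nat.gcd s n = 1)
    (σ : L ≃ₐ[K] L) (hσ : ∀ x : L, σ x = x ^ q ^ s)
    (d : ℕ) (hd : 3 ≤ d) (a b : L)
    (M : ℕ → ℤ → L)
    (hMpos : ∀ (l : ℕ) (hl1 : 1 ≤ l) (hl2 : l ≤ d) (k : ℕ), 1 ≤ k →
      M l k = Amat σ d a b k ⟨l - 1, by omega⟩ ⟨d - 1, by omega⟩)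
    (hMdiag : ∀ (l : ℕ), 1 ≤ l → l ≤ d → M l ((l : ℤ) - d) = 1)
    (hMzero : ∀ (l : ℕ), 1 ≤ l → l ≤ d → ∀ k : ℤ, k ≤ 0 → k ≠ (l : ℤ) - d → M l k = 0)
    (hab : (σ ^ d) a * b = σ a * (σ ^ d) b)
    (k : ℕ) (hk : d + 1 ≤ k)
    (z : ℕ → ℕ → L)
    (hz00 : z 0 0 = 1)
    (hzj0 : ∀ j : ℕ, 1 ≤ j →
      z j 0 = z (j - 1) 0 * (σ ^ ((k : ℤ) - ((j : ℤ) - 1) * d - 1)) a)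
    (hzji : ∀ j i : ℕ, 0 < i → i < j →
      z j i = z (j - 1) i * (σ ^ ((k : ℤ) - ((j : ℤ) - 1) * d + i - 1)) a)
    (hzjj : ∀ j : ℕ, 1 ≤ j →
      z j j = z (j - 1) (j - 1) * (σ ^ ((k : ℤ) - ((j : ℤ) - 1) * d + j - 2)) b) :
    (∀ j : ℕ, j ≤ (k - 1) / d + 1 → ∀ l : ℕ, 1 ≤ l → l ≤ d →
        M l (k : ℤ) = ∑ i ∈ Finset.range (j + 1),
          (j.choose i : L) * z j i * M l ((k : ℤ) - (j : ℤ) * d + i))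
      ∧ (∀ j i : ℕ, 0 < i → i < j →
          z (j - 1) i * (σ ^ ((k : ℤ) - ((j : ℤ) - 1) * d + i - 1)) a
            = z (j - 1) (i - 1) * (σ ^ ((k : ℤ) - ((j : ℤ) - 1) * d + i - 2)) b) := by
  have hent : ∀ l : ℕ, ∀ (hl1 : 1 ≤ l) (hl2 : l ≤ d), ∀ m c : ℕ, ∀ hc : c < d,
      Amat σ d a b m ⟨l - 1, by omega⟩ ⟨c, hc⟩ = M l ((m : ℤ) - d + c + 1) := by
    intro l hl1 hl2 m
    induction m with
    | zero =>
      intro c hc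
      have : Amat σ d a b 0 = 1 := by simp [Amat]
      rw [this, Matrix.one_apply]
      split_ifs with h
      · rw [Fin.mk.injEq] at h
        rw [← hMdiag l hl1 hl2]
        congr 1
        push_cast
        omega
      · rw [Fin.mk.injEq] at h
        rw [hMzero l hl1 hl2 _ (by push_cast; omega) (by push_cast; omega)]
    | succ m ih =>
      intro c hc
      by_cases h : c + 1 < d
      · rw [Amat_succ_lt σ d a b m _ c h, ih]
        congr 1
        push_cast
        ring
      · obtain rfl : c = d - 1 := by omega
        rw [← hMpos l hl1 hl2 (m + 1) (by omega)]
        congr 1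
        push_cast
        omega
  have hrec : ∀ l : ℕ, 1 ≤ l → l ≤ d → ∀ m : ℤ, 1 ≤ m →
      M l m = M l (m - d) * (σ ^ (m - 1)) a + M l (m - d + 1) * (σ ^ (m - 1)) b := by
    intro l hl1 hl2 m hm
    obtain ⟨t, rfl⟩ : ∃ t : ℕ, m = ((t + 1 : ℕ) : ℤ) := ⟨(m - 1).toNat, by push_cast; omega⟩
    rw [hMpos l hl1 hl2 (t + 1) (by omega), Amat_succ_last σ d hd, hent l hl1 hl2,
      hent l hl1 hl2]
    have e1 : (((t + 1 : ℕ) : ℤ) - 1) = (t : ℤ) := by push_cast; ring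
    rw [e1, zpow_natCast]
    congr 3 <;> push_cast <;> ring
  have hza : ∀ j i : ℕ, i ≤ j →
      z (j + 1) i = z j i * (σ ^ ((k : ℤ) - j * d + i - 1)) a := by
    intro j i hij
    rcases Nat.eq_zero_or_pos i with rfl | hi
    · have := hzj0 (j + 1) (by omega)
      simpa using this
    · have := hzji (j + 1) i hi (by omega)
      simpa using this
  have hzb : ∀ j : ℕ,
      z (j + 1) (j + 1) = z j j * (σ ^ ((k : ℤ) - j * d + j - 1)) b := by
    intro j
    have := hzjj (j + 1) (by omega)
    rw [this]
    simp only [Nat.add_sub_cancel]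
    congr 3
    push_cast
    ring
  have hshift : ∀ e : ℤ, (σ ^ (e + d)) a * (σ ^ e) b = (σ ^ (e + 1)) a * (σ ^ (e + d)) b := by
    intro e
    have := congrArg (σ ^ e) hab
    rw [map_mul, map_mul] at this
    simpa [zpow_add, AlgEquiv.mul_apply] using this
  have hP : ∀ j i : ℕ, i < j →
      z j (i + 1) * (σ ^ ((k : ℤ) - j * d + i)) a
        = z j i * (σ ^ ((k : ℤ) - j * d + i - 1)) b := by
    intro j
    induction j with
    | zero => intro i hi; omega
    | succ j ih =>
      intro i hi
      have hs' := hshift ((k : ℤ) - (j + 1 : ℕ) * d + i - 1)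
      have e1 : (k : ℤ) - (j + 1 : ℕ) * d + i - 1 + d = (k : ℤ) - j * d + i - 1 := by
        push_cast; ring
      have e2 : (k : ℤ) - (j + 1 : ℕ) * d + i - 1 + 1 = (k : ℤ) - (j + 1 : ℕ) * d + i := by
        ring
      rw [e1, e2] at hs'
      have key : z (j + 1) (i + 1) = z j i * (σ ^ ((k : ℤ) - j * d + i - 1)) b := by
        rcases Nat.lt_or_ge i j with h | h
        · rw [hza j (i + 1) h, ← ih i h]
          congr 3
          push_cast
          ring
        · obtain rfl : i = j := by omega
          exact hzb i
      rw [key, hza j i (by omega)]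
      linear_combination (-(z j i)) * hs'
  refine ⟨?_, ?_⟩
  · intro j
    induction j with
    | zero =>
      intro _ l _ _
      simp [hz00]
    | succ j ih =>
      intro hj l hl1 hl2
      rw [ih (by omega) l hl1 hl2]
      have hjd : j * d ≤ k - 1 :=
        (Nat.mul_le_mul_right d (by omega)).trans (Nat.div_mul_le_self (k - 1) d)
      have hjd' : (j : ℤ) * d ≤ k - 1 := by
        have : ((j * d : ℕ) : ℤ) ≤ ((k - 1 : ℕ) : ℤ) := by exact_mod_cast hjd
        push_cast at this
        omega
      have hstep : ∀ i ∈ Finset.range (j + 1),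
          (j.choose i : L) * z j i * M l ((k : ℤ) - (j : ℤ) * d + i)
          = (j.choose i : L) * z (j + 1) i * M l ((k : ℤ) - (j + 1 : ℕ) * d + i)
          + (j.choose i : L) * z (j + 1) (i + 1)
            * M l ((k : ℤ) - (j + 1 : ℕ) * d + (i + 1 : ℕ)) := by
        intro i hi
        have hi' : i ≤ j := by simpa [Nat.lt_succ_iff] using hi
        rw [hrec l hl1 hl2 _ (by omega)]
        have e1 : (k : ℤ) - (j : ℤ) * d + i - d = (k : ℤ) - (j + 1 : ℕ) * d + i := by
          push_cast; ring
        have e2 : (k : ℤ) - (j + 1 : ℕ) * d + i + 1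
            = (k : ℤ) - (j + 1 : ℕ) * d + (i + 1 : ℕ) := by
          push_cast; ring
        rw [e1, e2]
        have key : z (j + 1) (i + 1) = z j i * (σ ^ ((k : ℤ) - j * d + i - 1)) b := by
          rcases Nat.lt_or_ge i j with h | h
          · rw [hza j (i + 1) h, ← hP j i h]
            congr 3
            push_cast
            ring
          · obtain rfl : i = j := by omega
            exact hzb i
        rw [key, hza j i hi']
        ring
      rw [Finset.sum_congr rfl hstep, Finset.sum_add_distrib, Finset.sum_range_succ' _ (j + 1)]
      have hR : ∀ i ∈ Finset.range (j + 1),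
          ((j + 1).choose (i + 1) : L) * z (j + 1) (i + 1)
            * M l ((k : ℤ) - (j + 1 : ℕ) * d + (i + 1 : ℕ))
          = (j.choose i : L) * z (j + 1) (i + 1)
            * M l ((k : ℤ) - (j + 1 : ℕ) * d + (i + 1 : ℕ))
          + (j.choose (i + 1) : L) * z (j + 1) (i + 1)
            * M l ((k : ℤ) - (j + 1 : ℕ) * d + (i + 1 : ℕ)) := by
        intro i _
        rw [Nat.choose_succ_succ, Nat.cast_add]
        ring
      rw [Finset.sum_congr rfl hR, Finset.sum_add_distrib]
      have hS : ∑ i ∈ Finset.range (j + 1),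
          (j.choose i : L) * z (j + 1) i * M l ((k : ℤ) - (j + 1 : ℕ) * d + i)
          = ∑ i ∈ Finset.range (j + 1), (j.choose (i + 1) : L) * z (j + 1) (i + 1)
            * M l ((k : ℤ) - (j + 1 : ℕ) * d + (i + 1 : ℕ))
          + (j.choose 0 : L) * z (j + 1) 0 * M l ((k : ℤ) - (j + 1 : ℕ) * d + (0 : ℕ)) := by
        rw [← Finset.sum_range_succ' (fun i : ℕ => (j.choose i : L) * z (j + 1) i
          * M l ((k : ℤ) - (j + 1 : ℕ) * d + i)) (j + 1), Finset.sum_range_succ _ (j + 1)]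
        simp
      rw [hS, Nat.choose_zero_right, Nat.choose_zero_right]
      ring
  · intro j i hi hij
    obtain ⟨j, rfl⟩ : ∃ t, j = t + 1 := ⟨j - 1, by omega⟩
    obtain ⟨i, rfl⟩ : ∃ t, i = t + 1 := ⟨i - 1, by omega⟩
    have := hP j i (by omega)
    have e1 : (k : ℤ) - (((j + 1 : ℕ) : ℤ) - 1) * d + (i + 1 : ℕ) - 1 = (k : ℤ) - j * d + i := by
      push_cast; ring
    have e2 : (k : ℤ) - (((j + 1 : ℕ) : ℤ) - 1) * d + (i + 1 : ℕ) - 2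
        = (k : ℤ) - j * d + i - 1 := by
      push_cast; ring
    rw [e1, e2]
    simpa using this
end

section
/- Let d ≥ 3, n = d²−1, and let a ∈ F_{q^n} with a ≠ 0 and b = (∏_{i=1}^{d−1} σ^{id}(a))^{−1}. Then σ^d(a)·b = σ(a)·σ^d(b), and consequently σ^{k−1}(a)·σ^{k−d−1}(b) = σ^{k−d}(a)·σ^{k−1}(b) for every integer k ≥ d+1, where powers of σ are taken modulo n. -/
/-- (Lemma `finalteorecurs`.) Let `d ≥ 3`, `n = d² - 1`, `a ≠ 0` and
`b = (∏_{i=1}^{d-1} σ^{id}(a))⁻¹`. Then `σ^d(a)·b = σ(a)·σ^d(b)`, and consequently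
`σ^{k-1}(a)·σ^{k-d-1}(b) = σ^{k-d}(a)·σ^{k-1}(b)` for every `k ≥ d+1`. -/
theorem stmt_11 (p q : ℕ) (hp : p.Prime) (hq : ∃ m : ℕ, 0 < m ∧ q = p ^ m)
    (K L : Type*) [Field K] [Field L] [Fintype K] [Fintype L] [Algebra K L]
    (hcardK : Fintype.card K = q)
    (d : ℕ) (hd : 3 ≤ d)
    (n : ℕ) (hnval : n = d ^ 2 - 1) (hcardL : Fintype.card L = q ^ n)
    (s : ℕ) (hs : 0 < s) (hsn : Nat.gcd s n = 1)
    (σ : L ≃ₐ[K] L) (hσ : ∀ x : L, σ x = x ^ q ^ s)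
    (a b : L) (ha : a ≠ 0)
    (hb : b = (∏ i ∈ Finset.Icc 1 (d - 1), (σ ^ (i * d)) a)⁻¹) :
    (σ ^ d) a * b = σ a * (σ ^ d) b
      ∧ ∀ k : ℕ, d + 1 ≤ k →
          (σ ^ (k - 1)) a * (σ ^ (k - d - 1)) b = (σ ^ (k - d)) a * (σ ^ (k - 1)) b := by
  have hpow : ∀ (j : ℕ) (x : L), (σ ^ j) x = x ^ (q ^ s) ^ j := by
    intro j
    induction j with
    | zero => intro x; simp
    | succ j ih =>
      intro x
      rw [pow_succ, AlgEquiv.mul_apply, ih, hσ, ← pow_mul, pow_succ' (q ^ s) j]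
  have hn1 : ∀ x : L, (σ ^ n) x = x := by
    intro x
    rw [hpow, ← pow_mul, mul_comm s n, pow_mul, ← hcardL, FiniteField.pow_card_pow]
  have hadd : ∀ (i j : ℕ) (x : L), (σ ^ i) ((σ ^ j) x) = (σ ^ (i + j)) x := by
    intro i j x
    rw [pow_add, AlgEquiv.mul_apply]
  have hdd : (σ ^ (d * d)) a = σ a := by
    have h1 : d * d = 1 + n := by
      have : 1 ≤ d ^ 2 := Nat.one_le_pow _ _ (by omega)
      rw [hnval, ← pow_two]; omega
    rw [h1, ← hadd, hn1, pow_one]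
  have hne : ∀ j : ℕ, (σ ^ j) a ≠ 0 := fun j => by rw [hpow]; exact pow_ne_zero _ ha
  have key : (σ ^ d) a * b = σ a * (σ ^ d) b := by
    obtain ⟨e, rfl⟩ : ∃ e, d = e + 1 := ⟨d - 1, by omega⟩
    have hP : ∏ i ∈ Finset.Icc 1 (e + 1 - 1), (σ ^ (i * (e + 1))) a
        = ∏ i ∈ Finset.range e, (σ ^ ((i + 1) * (e + 1))) a := by
      rw [Nat.add_sub_cancel, Finset.prod_bij' (fun i _ => i - 1) (fun i _ => i + 1)] <;>
        simp +contextual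
      all_goals intros; omega
    rw [hP] at hb
    have hP0 : ∏ i ∈ Finset.range e, (σ ^ ((i + 1) * (e + 1))) a ≠ 0 :=
      Finset.prod_ne_zero_iff.2 fun i _ => hne _
    have hP1 : ∏ i ∈ Finset.range e, (σ ^ ((i + 1 + 1) * (e + 1))) a ≠ 0 :=
      Finset.prod_ne_zero_iff.2 fun i _ => hne _
    have hsb : (σ ^ (e + 1)) b = (∏ i ∈ Finset.range e, (σ ^ ((i + 1 + 1) * (e + 1))) a)⁻¹ := by
      rw [hb, map_inv₀, map_prod]
      congr 1
      refine Finset.prod_congr rfl fun i _ => ?_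
      rw [hadd]
      congr 2
      ring
    have h1 := Finset.prod_range_succ (fun i => (σ ^ ((i + 1) * (e + 1))) a) e
    rw [Finset.prod_range_succ', hdd, zero_add, one_mul] at h1
    rw [hsb, hb, ← div_eq_mul_inv, ← div_eq_mul_inv, div_eq_div_iff hP0 hP1, mul_comm, h1,
      mul_comm]
  refine ⟨key, fun k hk => ?_⟩
  have h := congrArg (σ ^ (k - d - 1)) key
  have hs1 : (σ ^ (k - d - 1)) (σ a) = (σ ^ (k - d - 1 + 1)) a := by
    rw [← hadd, pow_one]
  rw [map_mul, map_mul, hadd, hadd, hs1, show k - d - 1 + d = k - 1 by omega,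
    show k - d - 1 + 1 = k - d by omega] at h
  exact h
end

section
/- Let n = 8 and let σ be a generator of Gal(F_{q^8}/F_q). For a, b ∈ F_{q^8}, the F_q-dimension of the kernel of a·x + b·x^σ − x^{σ^3} equals 3 if and only if the following hold: N_{q^8/q}(a) = 1; q ≡ 0 or 2 (mod 3); and there exists α ∈ F_{q^8} with α² + α + 1 = 0 and b = −α · (σ^6(a)·σ^3(a))^{−1}. -/
open Finset in
theorem abel_aux {L : Type*} [CommRing L] (c y : ℕ → L) (n : ℕ) :
    ∑ i ∈ range (n+1), c i * y i = (∑ k ∈ range (n+1), c k) * y n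
      - ∑ i ∈ range n, (∑ k ∈ range (i+1), c k) * (y (i+1) - y i) := by
  induction n with
  | zero => simp
  | succ n ih =>
    rw [sum_range_succ, ih, sum_range_succ c (n+1),
      sum_range_succ (fun i => (∑ k ∈ range (i+1), c k) * (y (i+1) - y i)) n]
    ring

open Finset in
theorem sig_aux {K L : Type*} [Field K] [Field L] [Algebra K L] [FiniteDimensional K L]
    (σ : L ≃ₐ[K] L) (hfix : ∀ x : L, σ x = x → ∃ k : K, algebraMap K L k = x) (d : ℕ) :
    ∀ (V : Submodule K L) (c : ℕ → L),
      (∀ x ∈ V, ∑ i ∈ range (d+1), c i * (σ ^ i) x = 0) →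
      d + 1 ≤ Module.finrank K V → ∀ i < d + 1, c i = 0 := by
  induction d with
  | zero =>
    intro V c h hV i hi
    obtain rfl : i = 0 := by omega
    have hne : V ≠ ⊥ := by
      rintro rfl
      simp at hV
    obtain ⟨v, hv, hv0⟩ := V.exists_mem_ne_zero_of_ne_bot hne
    have := h v hv
    simpa [hv0] using this
  | succ d ih =>
    intro V c h hV
    have hne : V ≠ ⊥ := by
      rintro rfl
      simp at hV
    obtain ⟨v, hv, hv0⟩ := V.exists_mem_ne_zero_of_ne_bot hne
    let T : L →ₗ[K] L := (σ.toLinearMap - LinearMap.id) ∘ₗ LinearMap.mulLeft K v⁻¹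
    have hT : ∀ x, T x = σ (v⁻¹ * x) - v⁻¹ * x := fun x => rfl
    have hS : ∑ k ∈ range (d+1+1), c k * (σ ^ k) v = 0 := h v hv
    have key := ih (V.map T) (fun i => ∑ k ∈ range (i+1), c k * (σ ^ k) v) (by
      rintro _ ⟨x, hx, rfl⟩
      have h1 := abel_aux (fun k => c k * (σ ^ k) v) (fun k => (σ ^ k) (v⁻¹ * x)) (d+1)
      have h2 : ∑ i ∈ range (d + 1 + 1), c i * (σ ^ i) v * (σ ^ i) (v⁻¹ * x) = 0 := by
        rw [← h x hx]
        refine sum_congr rfl fun i _ => ?_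
        rw [mul_assoc, ← map_mul, mul_inv_cancel_left₀ hv0]
      rw [h2, hS, zero_mul, zero_sub, eq_comm, neg_eq_zero] at h1
      rw [← h1]
      refine sum_congr rfl fun i _ => ?_
      rw [hT, map_sub, pow_succ]
      rfl) (by
      have h1 := LinearMap.finrank_range_add_finrank_ker (T.domRestrict V)
      have h2 : LinearMap.range (T.domRestrict V) = V.map T := by
        rw [LinearMap.range_domRestrict]
      rw [h2] at h1
      have h3 : Module.finrank K (LinearMap.ker (T.domRestrict V)) ≤ 1 := by
        refine finrank_le_one ⟨⟨v, hv⟩, ?_⟩ ?_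
        · simp [LinearMap.mem_ker, hT, hv0]
        · rintro ⟨⟨w, hw⟩, hw'⟩
          have : σ (v⁻¹ * w) = v⁻¹ * w := by
            rw [LinearMap.mem_ker] at hw'
            exact sub_eq_zero.mp hw'
          obtain ⟨k, hk⟩ := hfix _ this
          refine ⟨k, ?_⟩
          ext
          simp only [SetLike.mk_smul_mk, Algebra.smul_def, hk]
          field_simp
      omega)
    have key2 : ∀ i < d + 1 + 1, ∑ k ∈ range (i+1), c k * (σ ^ k) v = 0 := by
      intro i hi
      rcases Nat.lt_succ_iff_lt_or_eq.mp hi with h' | rfl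
      · exact key i h'
      · exact hS
    intro i hi
    have h0 : c i * (σ ^ i) v = 0 := by
      rcases i with _ | i
      · simpa using key2 0 hi
      · have h1 := key2 (i+1) hi
        rw [sum_range_succ, key2 i (by omega), zero_add] at h1
        exact h1
    have : (σ ^ i) v ≠ 0 := (map_ne_zero_iff _ (σ ^ i).injective).2 hv0
    exact (mul_eq_zero.mp h0).resolve_right this

theorem fix_aux {K L : Type*} [Field K] [Field L] [Fintype K] [Fintype L] [Algebra K L]
    (x : L) (hx : x ^ Fintype.card K = x) : ∃ k : K, algebraMap K L k = x := by
  have h := (IsGalois.mem_bot_iff_fixed (F := K) (E := L) x).2 (fun g => by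
    obtain ⟨n, rfl⟩ := (FiniteField.bijective_frobeniusAlgEquivOfAlgebraic_pow K L).2 g
    show (FiniteField.frobeniusAlgEquivOfAlgebraic K L ^ n.1) x = x
    generalize n.1 = m
    induction m with
    | zero => rfl
    | succ m ih =>
      rw [pow_succ, AlgEquiv.mul_apply]
      have : FiniteField.frobeniusAlgEquivOfAlgebraic K L x = x := hx
      rw [this, ih])
  exact IntermediateField.mem_bot.1 h

theorem fwd_aux {L : Type*} [Field L] (σ : L →+* L) (a b : ℕ → L)
    (ha : ∀ i, σ (a i) = a (i+1)) (hb : ∀ i, σ (b i) = b (i+1))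
    (ha8 : ∀ i, a (i+8) = a i) (hb8 : ∀ i, b (i+8) = b i)
    (E1 : a 0 * (a 5 * b 2 + b 5 * a 3) = 1)
    (E2 : b 0 * (a 5 * b 2 + b 5 * a 3) + b 5 * b 3 * a 1 = 0)
    (E3 : a 5 * a 2 + b 5 * b 3 * b 1 = 0) :
    a 0 * a 1 * a 2 * a 3 * a 4 * a 5 * a 6 * a 7 = 1 ∧
      ∃ α : L, α ^ 2 + α + 1 = 0 ∧ σ α = α ^ 2 ∧ b 0 = -α * (a 6 * a 3)⁻¹ := by
  have a8 : a 8 = a 0 := ha8 0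
  have a9 : a 9 = a 1 := ha8 1
  have a10 : a 10 = a 2 := ha8 2
  have a11 : a 11 = a 3 := ha8 3
  have b8 : b 8 = b 0 := hb8 0
  have h0 : a 0 ≠ 0 := left_ne_zero_of_mul (by rw [E1]; exact one_ne_zero)
  have hn : ∀ i, a i ≠ 0 := by
    intro i
    induction i with
    | zero => exact h0
    | succ i ih => rw [← ha]; simpa using ih
  have E3' : a 7 * a 4 + b 7 * b 5 * b 3 = 0 := by
    have := congrArg (fun x => σ (σ x)) E3
    simpa [ha, hb] using this
  have F1 : b 0 + a 0 * a 1 * b 5 * b 3 = 0 := by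
    linear_combination a 0 * E2 - b 0 * E1
  have F2 : b 7 * b 0 = a 0 * a 1 * a 4 * a 7 := by
    linear_combination b 7 * F1 - a 0 * a 1 * E3'
  have F3 : b 0 * b 1 = a 1 * a 2 * a 5 * a 0 := by
    have := congrArg σ F2
    simpa [ha, hb, a8, b8] using this
  obtain ⟨N, hN⟩ : ∃ N, N = a 0 * a 1 * a 2 * a 3 * a 4 * a 5 * a 6 * a 7 := ⟨_, rfl⟩
  have hN0 : N ≠ 0 := by
    rw [hN]; simp [hn]
  have hσN : σ N = N := by
    rw [hN]; simp only [map_mul, ha, a8]; ring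
  obtain ⟨u, hu⟩ : ∃ u : ℕ → L, ∀ i, u i = - b i * a (i+6) * a (i+3) := ⟨_, fun _ => rfl⟩
  have hσu : ∀ i, σ (u i) = u (i+1) := by
    intro i
    rw [hu, hu]
    simp only [map_mul, map_neg, ha, hb]
    try ring_nf
  have u0 : u 0 = -b 0 * a 6 * a 3 := hu 0
  have u1 : u 1 = -b 1 * a 7 * a 4 := hu 1
  have u2 : u 2 = -b 2 * a 0 * a 5 := by rw [← a8]; exact hu 2
  have u3 : u 3 = -b 3 * a 1 * a 6 := by rw [← a9]; exact hu 3
  have u5 : u 5 = -b 5 * a 3 * a 0 := by rw [← a8, ← a11]; exact hu 5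
  have G1 : u 0 * u 1 = N := by
    rw [u0, u1, hN]; linear_combination a 6 * a 3 * a 7 * a 4 * F3
  have G2 : u 1 * u 2 = N := by
    have := congrArg σ G1
    simpa [hσu, hσN] using this
  have hu1 : u 1 ≠ 0 := by
    rintro h; rw [h, mul_zero] at G1; exact hN0 G1.symm
  have G3 : u 2 = u 0 := by
    apply mul_left_cancel₀ hu1; rw [G2, ← G1, mul_comm]
  have G4 : u 3 = u 1 := by
    have := congrArg σ G3
    simpa [hσu] using this
  have G5 : u 5 = u 1 := by
    have := congrArg (fun x => σ (σ x)) G4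
    simp only [hσu] at this
    exact this.trans G4
  have G6 : u 0 + u 1 + 1 = 0 := by
    have : u 2 + u 5 + 1 = 0 := by rw [u2, u5]; linear_combination -E1
    rwa [G3, G5] at this
  have G7 : u 1 ^ 3 = N := by
    have : u 1 * u 3 * u 5 = N := by
      rw [u1, u3, u5, hN]
      linear_combination (-a 7 * a 4 * a 1 * a 6 * a 3 * a 0) * E3
    rw [G4, G5] at this
    rw [← this]; ring
  have G8 : u 0 = u 1 ^ 2 := by
    apply mul_right_cancel₀ hu1; rw [G1, ← G7]; ring
  have G9 : u 1 = u 0 ^ 2 := by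
    have := congrArg σ G8
    simpa [hσu, G3] using this
  have G10 : N = 1 := by
    rw [← G7]
    apply mul_right_cancel₀ hu1
    linear_combination -G9 + (-(u 0) - u 1 ^ 2) * G8
  refine ⟨hN ▸ G10, u 0, by rw [← G9]; linear_combination G6, by rw [hσu]; exact G9, ?_⟩
  rw [u0]
  have := hn 6
  have := hn 3
  field_simp

theorem bwd_aux {L : Type*} [Field L] (σ : L →+* L) (a b : ℕ → L)
    (ha : ∀ i, σ (a i) = a (i+1)) (hb : ∀ i, σ (b i) = b (i+1))
    (ha8 : ∀ i, a (i+8) = a i)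
    (hN : a 0 * a 1 * a 2 * a 3 * a 4 * a 5 * a 6 * a 7 = 1)
    (α : L) (hα : α ^ 2 + α + 1 = 0) (hσ : σ α = α ^ 2) (hb0 : b 0 = -α * (a 6 * a 3)⁻¹) :
    a 0 * (a 5 * b 2 + b 5 * a 3) = 1 ∧
    b 0 * (a 5 * b 2 + b 5 * a 3) + b 5 * b 3 * a 1 = 0 ∧
    a 5 * a 2 + b 5 * b 3 * b 1 = 0 := by
  have a8 : a 8 = a 0 := ha8 0
  have a9 : a 9 = a 1 := ha8 1
  have a10 : a 10 = a 2 := ha8 2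
  have a11 : a 11 = a 3 := ha8 3
  have h0 : a 0 ≠ 0 := by
    rintro h; simp [h] at hN
  have hn : ∀ i, a i ≠ 0 := by
    intro i
    induction i with
    | zero => exact h0
    | succ i ih => rw [← ha]; simpa using ih
  have h3 : α ^ 3 = 1 := by linear_combination (α - 1) * hα
  have h4 : (α ^ 2) ^ 2 = α := by linear_combination α * h3
  have B0 : b 0 * (a 6 * a 3) = -α := by
    have := hn 6
    have := hn 3
    rw [hb0]; field_simp
  have B1 : b 1 * (a 7 * a 4) = -α ^ 2 := by
    have := congrArg σ B0
    simpa [ha, hb, hσ] using this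
  have B2 : b 2 * (a 0 * a 5) = -α := by
    have := congrArg σ B1
    simpa [ha, hb, hσ, a8, h4] using this
  have B3 : b 3 * (a 1 * a 6) = -α ^ 2 := by
    have := congrArg σ B2
    simpa [ha, hb, hσ] using this
  have B4 : b 4 * (a 2 * a 7) = -α := by
    have := congrArg σ B3
    simpa [ha, hb, hσ, h4] using this
  have B5 : b 5 * (a 3 * a 0) = -α ^ 2 := by
    have := congrArg σ B4
    simpa [ha, hb, hσ, a8] using this
  have E1 : a 0 * (a 5 * b 2 + b 5 * a 3) = 1 := by
    linear_combination B2 + B5 - hα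
  have B35 : (b 5 * (a 3 * a 0)) * (b 3 * (a 1 * a 6)) = α := by
    rw [B3, B5]; linear_combination h4
  refine ⟨E1, ?_, ?_⟩
  · apply mul_left_cancel₀ (mul_ne_zero h0 (mul_ne_zero (hn 6) (hn 3)))
    linear_combination b 0 * a 6 * a 3 * E1 + B0 + B35
  · have hne : a 0 * a 1 * a 3 * a 4 * a 6 * a 7 ≠ 0 := by simp [hn]
    apply mul_left_cancel₀ hne
    linear_combination hN + b 1 * a 7 * a 4 * B35 + α * B1 - h3

theorem ker_aux {K L : Type*} [Field K] [Field L] [Algebra K L] [FiniteDimensional K L]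
    (σ : L ≃ₐ[K] L) (hfix : ∀ x : L, σ x = x → ∃ k : K, algebraMap K L k = x)
    (h8 : ∀ x, (σ ^ 8) x = x) (hL : Module.finrank K L = 8) (a b : L) :
    Module.finrank K
      (LinearMap.ker
        (LinearMap.mulLeft K a + LinearMap.mulLeft K b ∘ₗ σ.toLinearMap
          - (σ ^ 3 : L ≃ₐ[K] L).toLinearMap)) = 3 ↔
    ((σ ^ 0) a * ((σ ^ 5) a * (σ ^ 2) b + (σ ^ 5) b * (σ ^ 3) a) = 1 ∧
     (σ ^ 0) b * ((σ ^ 5) a * (σ ^ 2) b + (σ ^ 5) b * (σ ^ 3) a)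
        + (σ ^ 5) b * (σ ^ 3) b * (σ ^ 1) a = 0 ∧
     (σ ^ 5) a * (σ ^ 2) a + (σ ^ 5) b * (σ ^ 3) b * (σ ^ 1) b = 0) := by
  set f : L →ₗ[K] L := LinearMap.mulLeft K a + LinearMap.mulLeft K b ∘ₗ σ.toLinearMap
          - (σ ^ 3 : L ≃ₐ[K] L).toLinearMap with hf
  have hfx : ∀ x, f x = (σ ^ 0) a * (σ ^ 0) x + (σ ^ 0) b * (σ ^ 1) x - (σ ^ 3) x := by
    intro x; simp only [pow_zero, pow_one]; rfl
  have hcomp : ∀ i j x, (σ ^ i) ((σ ^ j) x) = (σ ^ (i+j)) x := by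
    intro i j x; rw [pow_add]; rfl
  have hfi : ∀ i x, (σ ^ i) (f x) = (σ ^ i) a * (σ ^ i) x + (σ ^ i) b * (σ ^ (i+1)) x
      - (σ ^ (i+3)) x := by
    intro i x; rw [hfx]; simp only [map_sub, map_add, map_mul, hcomp, add_zero]
  have h80 : ∀ x, (σ ^ 8) x = (σ ^ 0) x := fun x => by rw [h8]; rfl
  -- division identity
  have hdiv : ∀ x, 
     ((σ ^ 0) a * ((σ ^ 5) a * (σ ^ 2) b + (σ ^ 5) b * (σ ^ 3) a) - 1) * (σ ^ 0) x +
     ((σ ^ 0) b * ((σ ^ 5) a * (σ ^ 2) b + (σ ^ 5) b * (σ ^ 3) a)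
        + (σ ^ 5) b * (σ ^ 3) b * (σ ^ 1) a) * (σ ^ 1) x +
     ((σ ^ 5) a * (σ ^ 2) a + (σ ^ 5) b * (σ ^ 3) b * (σ ^ 1) b) * (σ ^ 2) x =
      ((σ ^ 5) a * (σ ^ 2) b + (σ ^ 5) b * (σ ^ 3) a) * (σ ^ 0) (f x)
      + (σ ^ 5) b * (σ ^ 3) b * (σ ^ 1) (f x) + (σ ^ 5) a * (σ ^ 2) (f x)
      + (σ ^ 5) b * (σ ^ 3) (f x) + (σ ^ 5) (f x) := by
    intro x
    simp only [hfi, Nat.reduceAdd]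
    rw [h80]
    ring
  generalize hc0 : (σ ^ 5) a * (σ ^ 2) b + (σ ^ 5) b * (σ ^ 3) a = c0 at *
  generalize hB : (σ ^ 0) b * c0 + (σ ^ 5) b * (σ ^ 3) b * (σ ^ 1) a = B at *
  generalize hC : (σ ^ 5) a * (σ ^ 2) a + (σ ^ 5) b * (σ ^ 3) b * (σ ^ 1) b = C at *
  constructor
  · intro h
    have key := sig_aux σ hfix 2 (LinearMap.ker f)
      (fun i => if i = 0 then (σ ^ 0) a * c0 - 1 else if i = 1 then B else C) (by
        intro x hx
        have hx0 : f x = 0 := hx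
        have := hdiv x
        rw [hx0] at this
        simp only [map_zero, mul_zero, add_zero] at this
        simpa [Finset.sum_range_succ] using this) (by omega)
    refine ⟨?_, ?_, ?_⟩
    · have := key 0 (by omega)
      simp only [if_true] at this
      exact sub_eq_zero.1 this
    · simpa using key 1 (by omega)
    · simpa using key 2 (by omega)
  · rintro ⟨E1, E2, E3⟩
    have h1 : Module.finrank K (LinearMap.ker f) ≤ 3 := by
      by_contra hcon
      have := sig_aux σ hfix 3 (LinearMap.ker f)
        (fun i => if i = 0 then (σ ^ 0) a else if i = 1 then (σ ^ 0) b else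
          if i = 2 then 0 else -1) (by
          intro x hx
          have hx0 : f x = 0 := hx
          rw [hfx] at hx0
          simp only [Finset.sum_range_succ, Finset.sum_range_zero]
          norm_num
          simpa [sub_eq_add_neg] using hx0) (by omega) 3 (by omega)
      norm_num at this
    have h2 : Module.finrank K (LinearMap.range f) ≤ 5 := by
      by_contra hcon
      have := sig_aux σ hfix 5 (LinearMap.range f)
        (fun i => if i = 0 then c0 else if i = 1 then (σ ^ 5) b * (σ ^ 3) b else
          if i = 2 then (σ ^ 5) a else if i = 3 then (σ ^ 5) b else if i = 4 then 0 else 1) (by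
          rintro _ ⟨x, rfl⟩
          have := hdiv x
          rw [E1, E2, E3] at this
          simp only [sub_self, zero_mul, add_zero] at this
          refine Eq.trans ?_ this.symm
          simp only [Finset.sum_range_succ, Finset.sum_range_zero]
          norm_num) (by omega) 5 (by omega)
      norm_num at this
    have h3 := LinearMap.finrank_range_add_finrank_ker f
    omega

theorem norm_aux {L : Type*} [Field L] (q s : ℕ) (hq : 2 ≤ q) (hsn : Nat.gcd s 8 = 1)
    (a : L) (h8 : a ^ q ^ 8 = a) (A : ℕ → L) (hA : ∀ i, A i = a ^ q ^ (s * i)) :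
    a ^ ((q ^ 8 - 1) / (q - 1)) = A 0 * A 1 * A 2 * A 3 * A 4 * A 5 * A 6 * A 7 := by
  obtain ⟨c, hc⟩ : ∃ c : ℕ → L, ∀ j, c j = a ^ q ^ j := ⟨_, fun _ => rfl⟩
  have hc8 : ∀ k j, c (8 * k + j) = c j := by
    intro k
    induction k with
    | zero => intro j; simp
    | succ k ih =>
      intro j
      rw [← ih j, hc, hc, show 8 * (k+1) + j = 8 + (8 * k + j) by ring, pow_add q 8, pow_mul, h8]
  have hmod : ∀ j, c j = c (j % 8) := by
    intro j
    conv_lhs => rw [← Nat.div_add_mod j 8]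
    rw [hc8]
  have hAc : ∀ i, A i = c ((s % 8) * i % 8) := by
    intro i
    rw [hA, ← hc, hmod]
    simp [Nat.mul_mod]
  have hprod : a ^ ((q ^ 8 - 1) / (q - 1)) = c 0 * c 1 * c 2 * c 3 * c 4 * c 5 * c 6 * c 7 := by
    rw [← Nat.geomSum_eq hq, ← Finset.prod_pow_eq_pow_sum]
    simp only [Finset.prod_range_succ, Finset.prod_range_zero, ← hc, one_mul]
  rw [hprod]
  have hs : s % 8 = 1 ∨ s % 8 = 3 ∨ s % 8 = 5 ∨ s % 8 = 7 := by
    have h2 : ¬ 2 ∣ s := by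
      intro h
      have : 2 ∣ Nat.gcd s 8 := Nat.dvd_gcd h (by norm_num)
      omega
    omega
  simp only [hAc]
  rcases hs with h | h | h | h <;> rw [h] <;> norm_num <;> ring


/-- (Last case of Proposition `prop:d=3`.) Let `n = 8` and `σ` a generator
of `Gal(F_{q^8}/F_q)`, i.e. `σ : x ↦ x^{q^s}` with `gcd(s,8) = 1`. For `a, b ∈ F_{q^8}`,
the `F_q`-dimension of the kernel of `a·x + b·x^σ − x^{σ³}` equals `3` iff
`N_{q^8/q}(a) = 1`, `q ≡ 0 or 2 (mod 3)`, and `b = −α·(σ⁶(a)·σ³(a))⁻¹` for a root `α` of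
`x² + x + 1`. -/
theorem stmt_12 (p q : ℕ) (hp : p.Prime) (hq : ∃ m : ℕ, 0 < m ∧ q = p ^ m)
    (K L : Type*) [Field K] [Field L] [Fintype K] [Fintype L] [Algebra K L]
    (hcardK : Fintype.card K = q) (hcardL : Fintype.card L = q ^ 8)
    (s : ℕ) (hs : 0 < s) (hsn : Nat.gcd s 8 = 1)
    (σ : L ≃ₐ[K] L) (hσ : ∀ x : L, σ x = x ^ q ^ s)
    (a b : L) :
    Module.finrank K
      (LinearMap.ker
        (LinearMap.mulLeft K a + LinearMap.mulLeft K b ∘ₗ σ.toLinearMap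
          - (σ ^ 3 : L ≃ₐ[K] L).toLinearMap)) = 3
      ↔ (a ^ ((q ^ 8 - 1) / (q - 1)) = 1
          ∧ (q % 3 = 0 ∨ q % 3 = 2)
          ∧ ∃ α : L, α ^ 2 + α + 1 = 0 ∧ b = -α * ((σ ^ 6) a * (σ ^ 3) a)⁻¹) := by
  obtain ⟨m, hm, hqm⟩ := hq
  have hq2 : 2 ≤ q := by rw [← hcardK]; exact Fintype.one_lt_card
  have hfr : Module.finrank K L = 8 := by
    have h := Module.card_eq_pow_finrank (K := K) (V := L)
    rw [hcardL, hcardK] at h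
    exact (Nat.pow_right_injective hq2 h).symm
  have hcard : ∀ x : L, x ^ q ^ 8 = x := by
    intro x; rw [← hcardL]; exact FiniteField.pow_card x
  have hcardk : ∀ (k : ℕ) (x : L), x ^ q ^ (8 * k) = x := by
    intro k x; rw [pow_mul, ← hcardL]; exact FiniteField.pow_card_pow k x
  have hpow : ∀ (i : ℕ) (x : L), (σ ^ i) x = x ^ q ^ (s * i) := by
    intro i
    induction i with
    | zero => intro x; simp
    | succ i ih =>
      intro x
      rw [pow_succ, AlgEquiv.mul_apply, ih, hσ, ← pow_mul, ← pow_add]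
      ring_nf
  have hsodd : s % 2 = 1 := by
    by_contra h
    have : 2 ∣ Nat.gcd s 8 := Nat.dvd_gcd (by omega) (by norm_num)
    omega
  have hss : ∃ k, s * s = 8 * k + 1 := by
    have h1 : s * s % 8 = 1 := by
      have : s % 8 = 1 ∨ s % 8 = 3 ∨ s % 8 = 5 ∨ s % 8 = 7 := by omega
      rcases this with h | h | h | h <;> simp [Nat.mul_mod, h]
    exact ⟨s * s / 8, by omega⟩
  have hfix : ∀ x : L, σ x = x → ∃ k : K, algebraMap K L k = x := by
    intro x hx
    apply fix_aux
    rw [hcardK]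
    have h1 : ∀ i, (σ ^ i) x = x := by
      intro i
      induction i with
      | zero => rfl
      | succ i ih => rw [pow_succ, AlgEquiv.mul_apply, hx, ih]
    obtain ⟨k, hk⟩ := hss
    have h2 := h1 s
    rw [hpow, hk, pow_add, pow_mul, hcardk, pow_one] at h2
    exact h2
  have h8 : ∀ x, (σ ^ 8) x = x := by
    intro x; rw [hpow, mul_comm, hcardk]
  rw [ker_aux σ hfix h8 hfr, norm_aux q s hq2 hsn a (hcard a) (fun i => (σ ^ i) a)
    (fun i => hpow i a)]
  have hsh : ∀ (x : L) (i : ℕ), (σ : L →+* L) ((σ ^ i) x) = (σ ^ (i+1)) x := by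
    intro x i; rw [pow_succ']; rfl
  have hp8 : ∀ (x : L) (i : ℕ), (σ ^ (i+8)) x = (σ ^ i) x := by
    intro x i; rw [pow_add, AlgEquiv.mul_apply, h8]
  constructor
  · rintro ⟨E1, E2, E3⟩
    obtain ⟨hN, α, hα, hσα, hb⟩ := fwd_aux (σ : L →+* L) (fun i => (σ ^ i) a)
      (fun i => (σ ^ i) b) (hsh a) (hsh b) (hp8 a) (hp8 b) E1 E2 E3
    refine ⟨hN, ?_, α, hα, hb⟩
    by_contra hcon
    have hq1 : q % 3 = 1 := by omega
    have h3 : α ^ 3 = 1 := by linear_combination (α - 1) * hα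
    have hqs : q ^ s % 3 = 1 := by rw [Nat.pow_mod, hq1]; simp
    have h4 : σ α = α := by
      rw [hσ, ← Nat.div_add_mod (q ^ s) 3, hqs, pow_add, pow_mul, h3]; simp
    have h5 : α ^ 2 = α := hσα.symm.trans h4
    have h6 : α = 1 := by linear_combination h3 - (α + 1) * h5
    have h7 : (3 : L) = 0 := by rw [h6] at hα; linear_combination hα
    have h8 : ((q ^ 8 : ℕ) : L) = 0 := by rw [← hcardL]; exact FiniteField.cast_card_eq_zero L
    have h9 : (q : L) = 0 := by
      push_cast at h8
      exact pow_eq_zero_iff (by norm_num) |>.1 h8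
    rw [← Nat.div_add_mod q 3, hq1] at h9
    push_cast at h9
    rw [h7] at h9
    simp at h9
  · rintro ⟨hN, hq3, α, hα, hb⟩
    have h3 : α ^ 3 = 1 := by linear_combination (α - 1) * hα
    refine bwd_aux (σ : L →+* L) (fun i => (σ ^ i) a)
      (fun i => (σ ^ i) b) (hsh a) (hsh b) (hp8 a) hN α hα ?_ hb
    show σ α = α ^ 2
    rcases hq3 with hq0 | hq2'
    · have hd : 3 ∣ p := Nat.prime_three.dvd_of_dvd_pow (n := m) (by rw [← hqm]; omega)
      have hp3 : p = 3 := ((Nat.prime_dvd_prime_iff_eq Nat.prime_three hp).1 hd).symm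
      have h8 : ((q ^ 8 : ℕ) : L) = 0 := by rw [← hcardL]; exact FiniteField.cast_card_eq_zero L
      have h7 : (3 : L) = 0 := by
        rw [hqm, hp3] at h8
        push_cast at h8
        rw [← pow_mul] at h8
        exact eq_zero_of_pow_eq_zero h8
      have h6 : (α - 1) ^ 2 = 0 := by linear_combination hα - α * h7
      have h9 : α = 1 := sub_eq_zero.1 (eq_zero_of_pow_eq_zero h6)
      rw [h9]; simp
    · have hqs : q ^ s % 3 = 2 := by
        rw [← Nat.div_add_mod s 2, hsodd, pow_add, pow_mul, Nat.mul_mod, Nat.pow_mod,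
          Nat.pow_mod q 2, hq2', Nat.pow_mod q 1, hq2']
        simp
      rw [hσ, ← Nat.div_add_mod (q ^ s) 3, hqs, pow_add, pow_mul, h3]; simp
end
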